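/- arXiv:2305.09486 — 2 statements merged into one kernel-verified Lean document; each statement's English description precedes it below -/
import Mathlib

section
/- Let N ≥ 1, 0 < s < 1, and let Ω ⊂ ℝ^N be a nonempty bounded open set with inradius R_Ω. Then for every q with 1 ≤ q < 1*_s = N/(N−s), the best constant satisfies S_{s,q}(Ω) ≤ 𝒮_{s,1*} · (ω_N R_Ω^N)^{(1/1*_s) − (1/q)}. -/
open MeasureTheory Real
open scoped ENNReal

noncomputable section

/-- Euclidean space `ℝ^N`. -/
abbrev Rn (N : ℕ) := EuclideanSpace ℝ (Fin N)

/-- The Gagliardo `W^{s,1}` seminorm `[u]_{s,1}`, as an extended nonnegative real. -/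
def gagE (N : ℕ) (s : ℝ) (u : Rn N → ℝ) : ℝ≥0∞ :=
  ∫⁻ x, ∫⁻ y, ENNReal.ofReal (|u x - u y| / dist x y ^ ((N : ℝ) + s))

/-- Membership in `W^{s,1}(ℝ^N)`: integrable with finite Gagliardo seminorm. -/
def memW (N : ℕ) (s : ℝ) (u : Rn N → ℝ) : Prop :=
  Integrable u volume ∧ gagE N s u < ⊤

/-- Real-valued Gagliardo seminorm. -/
def gag (N : ℕ) (s : ℝ) (u : Rn N → ℝ) : ℝ := (gagE N s u).toReal

/-- The `L^q(ℝ^N)` norm. -/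
def Lq (N : ℕ) (q : ℝ) (u : Rn N → ℝ) : ℝ := (∫ x, |u x| ^ q) ^ (1 / q)

/-- `u` is nonzero as an element of a Lebesgue-type space. -/
def nontriv (N : ℕ) (u : Rn N → ℝ) : Prop := ¬ u =ᵐ[(volume : Measure (Rn N))] 0

/-- The best constant `S_{s,q}(Ω)` of the embedding `W^{s,1}_0(Ω) ↪ L^q(Ω)`. -/
def SDom (N : ℕ) (s q : ℝ) (Ω : Set (Rn N)) : ℝ :=
  sInf { r : ℝ | ∃ u : Rn N → ℝ, memW N s u ∧
      (∀ᵐ x ∂(volume : Measure (Rn N)), x ∉ Ω → u x = 0) ∧ nontriv N u ∧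
      r = gag N s u / Lq N q u }

/-- The critical constant `𝒮_{s,1*}`. -/
def Scrit (N : ℕ) (s : ℝ) : ℝ :=
  sInf { r : ℝ | ∃ u : Rn N → ℝ, memW N s u ∧ nontriv N u ∧
      r = gag N s u / Lq N ((N : ℝ) / ((N : ℝ) - s)) u }

/-- The volume `ω_N` of the unit ball in `ℝ^N`. -/
def omegaN (N : ℕ) : ℝ := π ^ ((N : ℝ) / 2) / Real.Gamma ((N : ℝ) / 2 + 1)

/-- The inradius `R_Ω` of a set `Ω ⊆ ℝ^N`. -/
def inradius (N : ℕ) (Ω : Set (Rn N)) : ℝ :=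
  sSup { R : ℝ | 0 < R ∧ ∃ x ∈ Ω, Metric.ball x R ⊆ Ω }


/-- Kernel. -/
def fpK (N : ℕ) (s : ℝ) (x y : Rn N) : ℝ≥0∞ := (edist x y) ^ (-((N : ℝ) + s))

open Classical in
/-- Integrand of the fractional perimeter. -/
def fpD (N : ℕ) (s : ℝ) (E : Set (Rn N)) (x y : Rn N) : ℝ≥0∞ :=
  if (x ∈ E ↔ y ∈ E) then 0 else fpK N s x y

/-- Fractional perimeter (both orderings counted). -/
def FP (N : ℕ) (s : ℝ) (E : Set (Rn N)) : ℝ≥0∞ := ∫⁻ x, ∫⁻ y, fpD N s E x y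

lemma fpK_meas (N : ℕ) (s : ℝ) : Measurable (Function.uncurry (fpK N s)) := by
  unfold fpK Function.uncurry
  exact measurable_edist.pow_const _

lemma fpD_meas (N : ℕ) (s : ℝ) {E : Set (Rn N)} (hE : MeasurableSet E) :
    Measurable (Function.uncurry (fpD N s E)) := by
  classical
  have h1 : MeasurableSet {p : Rn N × Rn N | p.1 ∈ E} := measurable_fst hE
  have h2 : MeasurableSet {p : Rn N × Rn N | p.2 ∈ E} := measurable_snd hE
  have h3 : MeasurableSet {p : Rn N × Rn N | p.1 ∈ E ↔ p.2 ∈ E} := by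
    have : {p : Rn N × Rn N | p.1 ∈ E ↔ p.2 ∈ E} =
        ({p : Rn N × Rn N | p.1 ∈ E} ∩ {p : Rn N × Rn N | p.2 ∈ E}) ∪
        ({p : Rn N × Rn N | p.1 ∈ E}ᶜ ∩ {p : Rn N × Rn N | p.2 ∈ E}ᶜ) := by
      ext p; simp; tauto
    rw [this]
    exact (h1.inter h2).union (h1.compl.inter h2.compl)
  exact Measurable.ite h3 measurable_const (fpK_meas N s)

lemma fpD_meas_right (N : ℕ) (s : ℝ) {E : Set (Rn N)} (hE : MeasurableSet E) (x : Rn N) :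
    Measurable (fun y => fpD N s E x y) := by
  exact (fpD_meas N s hE).comp (measurable_prodMk_left (x := x))

lemma fpD_meas_int (N : ℕ) (s : ℝ) {E : Set (Rn N)} (hE : MeasurableSet E) :
    Measurable (fun x => ∫⁻ y, fpD N s E x y) := by
  exact (fpD_meas N s hE).lintegral_prod_right'

/-- Data of a reflection together with the half space containing the origin. -/
structure Refl (N : ℕ) (σ : Rn N → Rn N) (H : Set (Rn N)) : Prop where
  mp : MeasurePreserving σ volume volume
  inv : ∀ x, σ (σ x) = x
  iso : ∀ x y, edist (σ x) (σ y) = edist x y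
  cover : ∀ x, x ∈ H ∨ σ x ∈ H
  fix : ∀ x, x ∈ H → σ x ∈ H → σ x = x
  near : ∀ x y, x ∈ H → y ∈ H → edist x y ≤ edist x (σ y)
  norm_le : ∀ x, x ∈ H → ‖x‖ ≤ ‖σ x‖
  memH : ∀ x, ‖x‖ < ‖σ x‖ → x ∈ H
  measH : MeasurableSet H

/-- Polarization of a set. -/
def pol {N : ℕ} (σ : Rn N → Rn N) (H E : Set (Rn N)) : Set (Rn N) :=
  {x | (x ∈ H ∧ (x ∈ E ∨ σ x ∈ E)) ∨ (x ∉ H ∧ x ∈ E ∧ σ x ∈ E)}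

lemma pol_meas {N : ℕ} {σ : Rn N → Rn N} {H E : Set (Rn N)} (h : Refl N σ H)
    (hE : MeasurableSet E) : MeasurableSet (pol σ H E) := by
  have h2 : MeasurableSet (σ ⁻¹' E) := h.mp.measurable hE
  exact (h.measH.inter (hE.union h2)).union (h.measH.compl.inter (hE.inter h2))

lemma pol_mem {N : ℕ} {σ : Rn N → Rn N} {H E : Set (Rn N)} {x : Rn N}
    (hx : x ∈ H) : x ∈ pol σ H E ↔ (x ∈ E ∨ σ x ∈ E) := by
  simp [pol, hx]

lemma pol_mem' {N : ℕ} {σ : Rn N → Rn N} {H E : Set (Rn N)} (h : Refl N σ H) {x : Rn N}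
    (hx : x ∈ H) : σ x ∈ pol σ H E ↔ (x ∈ E ∧ σ x ∈ E) := by
  by_cases h' : σ x ∈ H
  · have := h.fix x hx h'
    simp [pol, this, hx]
  · simp [pol, h', h.inv, and_comm]

lemma symm_le {N : ℕ} {σ : Rn N → Rn N} {H : Set (Rn N)} (h : Refl N σ H)
    {f g : Rn N → ℝ≥0∞} (hf : Measurable f) (hg : Measurable g)
    (hfg : ∀ x ∈ H, f x + f (σ x) ≤ g x + g (σ x)) : ∫⁻ x, f x ≤ ∫⁻ x, g x := by
  have key : ∀ x, f x + f (σ x) ≤ g x + g (σ x) := by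
    intro x
    rcases h.cover x with hx | hx
    · exact hfg x hx
    · have := hfg _ hx
      rw [h.inv, add_comm, add_comm (g (σ x))] at this
      exact this
  have h2 : ∫⁻ x, (f x + f (σ x)) ≤ ∫⁻ x, (g x + g (σ x)) := lintegral_mono key
  rw [lintegral_add_left hf, lintegral_add_left hg, h.mp.lintegral_comp hf,
    h.mp.lintegral_comp hg, ← two_mul, ← two_mul] at h2
  exact (ENNReal.mul_le_mul_iff_right (by simp) (by simp)).1 h2

lemma symm_meas_le {N : ℕ} {σ : Rn N → Rn N} {H : Set (Rn N)} (h : Refl N σ H)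
    {F G : Set (Rn N)} (hF : MeasurableSet F) (hG : MeasurableSet G)
    (hfg : ∀ x ∈ H, F.indicator (1 : Rn N → ℝ≥0∞) x + F.indicator 1 (σ x) ≤
      G.indicator 1 x + G.indicator 1 (σ x)) : volume F ≤ volume G := by
  have := symm_le h (f := F.indicator 1) (g := G.indicator 1)
    (measurable_one.indicator hF) (measurable_one.indicator hG) hfg
  rwa [lintegral_indicator_one hF, lintegral_indicator_one hG] at this

lemma pol_vol {N : ℕ} {σ : Rn N → Rn N} {H E : Set (Rn N)} (h : Refl N σ H)
    (hE : MeasurableSet E) : volume (pol σ H E) = volume E := by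
  classical
  have key : ∀ x ∈ H, (pol σ H E).indicator (1 : Rn N → ℝ≥0∞) x + (pol σ H E).indicator 1 (σ x) =
      E.indicator 1 x + E.indicator 1 (σ x) := by
    intro x hx
    simp only [Set.indicator_apply, pol_mem hx, pol_mem' h hx]
    by_cases h1 : x ∈ E <;> by_cases h2 : σ x ∈ E <;> simp [h1, h2]
  exact le_antisymm (symm_meas_le h (pol_meas h hE) hE fun x hx => (key x hx).le)
    (symm_meas_le h hE (pol_meas h hE) fun x hx => (key x hx).ge)

lemma pol_out {N : ℕ} {σ : Rn N → Rn N} {H E : Set (Rn N)} (h : Refl N σ H)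
    (hE : MeasurableSet E) (M : ℝ) :
    volume (pol σ H E \ Metric.ball 0 M) ≤ volume (E \ Metric.ball 0 M) := by
  classical
  refine symm_meas_le h ((pol_meas h hE).diff measurableSet_ball) (hE.diff measurableSet_ball) ?_
  intro x hx
  have hn := h.norm_le x hx
  simp only [Set.indicator_apply, Set.mem_sdiff, pol_mem hx, pol_mem' h hx, mem_ball_zero_iff]
  by_cases h3 : ‖x‖ < M
  · by_cases h1 : x ∈ E <;> by_cases h2 : σ x ∈ E <;> by_cases h4 : ‖σ x‖ < M <;>
      simp [h1, h2, h3, h4]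
  · have h4 : ¬ ‖σ x‖ < M := by linarith
    by_cases h1 : x ∈ E <;> by_cases h2 : σ x ∈ E <;> simp [h1, h2, h3, h4]

lemma pol_gain {N : ℕ} {σ : Rn N → Rn N} {H E : Set (Rn N)} (h : Refl N σ H)
    (hE : MeasurableSet E) (r : ℝ) :
    volume (Metric.ball 0 r \ pol σ H E) +
      volume {x | x ∈ Metric.ball 0 r \ E ∧ σ x ∈ E \ Metric.ball 0 r}
      ≤ volume (Metric.ball 0 r \ E) := by
  classical
  set T := {x | x ∈ Metric.ball 0 r \ E ∧ σ x ∈ E \ Metric.ball 0 r} with hT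
  have hTm : MeasurableSet T := by
    exact (measurableSet_ball.diff hE).inter (h.mp.measurable (hE.diff measurableSet_ball))
  have hTH : ∀ x ∈ T, x ∈ H := by
    intro x hx
    apply h.memH
    have h1 := hx.1.1
    have h2 := hx.2.2
    simp only [mem_ball_zero_iff] at h1 h2
    linarith
  have hd : Disjoint (Metric.ball 0 r \ pol σ H E) T := by
    rw [Set.disjoint_left]
    intro x hx hxT
    exact hx.2 ((pol_mem (hTH x hxT)).2 (Or.inr hxT.2.1))
  rw [← measure_union hd hTm]
  refine symm_meas_le h ((measurableSet_ball.diff (pol_meas h hE)).union hTm)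
    (measurableSet_ball.diff hE) ?_
  intro x hx
  have hn := h.norm_le x hx
  simp only [Set.indicator_apply, Set.mem_sdiff, Set.mem_union, pol_mem hx, pol_mem' h hx,
    mem_ball_zero_iff, hT, Set.mem_ofPred_eq, h.inv]
  by_cases h3 : ‖x‖ < r
  · by_cases h1 : x ∈ E <;> by_cases h2 : σ x ∈ E <;> by_cases h4 : ‖σ x‖ < r <;>
      simp [h1, h2, h3, h4]
  · have h4 : ¬ ‖σ x‖ < r := by linarith
    by_cases h1 : x ∈ E <;> by_cases h2 : σ x ∈ E <;> simp [h1, h2, h3, h4]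

lemma pol_FP {N : ℕ} {s : ℝ} (hs : 0 < s) {σ : Rn N → Rn N} {H E : Set (Rn N)} (h : Refl N σ H)
    (hE : MeasurableSet E) : FP N s (pol σ H E) ≤ FP N s E := by
  classical
  have hP := pol_meas h hE
  refine symm_le h (fpD_meas_int N s hP) (fpD_meas_int N s hE) ?_
  intro x hx
  rw [← lintegral_add_left (fpD_meas_right N s hP x), ← lintegral_add_left (fpD_meas_right N s hE x)]
  refine symm_le h ((fpD_meas_right N s hP x).add (fpD_meas_right N s hP _))
    ((fpD_meas_right N s hE x).add (fpD_meas_right N s hE _)) ?_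
  intro y hy
  have e1 : fpK N s (σ x) (σ y) = fpK N s x y := by simp [fpK, h.iso]
  have e2 : fpK N s (σ x) y = fpK N s x (σ y) := by
    unfold fpK
    rw [← h.iso x (σ y), h.inv]
  have e3 : fpK N s x (σ y) ≤ fpK N s x y := by
    unfold fpK
    rw [ENNReal.rpow_neg, ENNReal.rpow_neg]
    exact ENNReal.inv_le_inv.2 (ENNReal.rpow_le_rpow (h.near x y hx hy) (by positivity))
  simp only [fpD, pol_mem hx, pol_mem' h hx, pol_mem hy, pol_mem' h hy, e1, e2]
  obtain ⟨d, hd⟩ := exists_add_of_le e3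
  rw [hd]
  generalize fpK N s x (σ y) = k
  by_cases h1 : x ∈ E <;> by_cases h2 : σ x ∈ E <;> by_cases h3 : y ∈ E <;>
    by_cases h4 : σ y ∈ E <;> simp [h1, h2, h3, h4, add_comm, add_left_comm]
  all_goals exact le_add_left (le_add_left le_rfl)

/-- The reflection `x ↦ x + (τ - 2⟪v,x⟫/|v|²) v`. -/
def sg {N : ℕ} (v : Rn N) (τ : ℝ) (x : Rn N) : Rn N :=
  x + (τ - 2 * inner ℝ v x / ‖v‖ ^ 2) • v

lemma sg_inner {N : ℕ} {v : Rn N} (hv : v ≠ 0) (τ : ℝ) (x : Rn N) :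
    inner ℝ v (sg v τ x) = τ * ‖v‖ ^ 2 - inner ℝ v x := by
  have : ‖v‖ ≠ 0 := norm_ne_zero_iff.2 hv
  unfold sg
  rw [inner_add_right, inner_smul_right, real_inner_self_eq_norm_sq]
  field_simp
  ring

lemma sg_mp {N : ℕ} {v : Rn N} (_hv : v ≠ 0) (τ : ℝ) :
    MeasurePreserving (sg v τ) (volume : Measure (Rn N)) volume := by
  have h1 := ((ℝ ∙ v)ᗮ.reflection).measurePreserving
  have h2 := measurePreserving_add_right (volume : Measure (Rn N)) (τ • v)
  have h3 := h2.comp h1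
  have e : sg v τ = (fun x => x + τ • v) ∘ ((ℝ ∙ v)ᗮ.reflection) := by
    funext x
    rw [Function.comp_apply, Submodule.reflection_orthogonal_apply,
      Submodule.reflection_singleton_apply]
    simp only [RCLike.ofReal_real_eq_id, id, sg]
    module
  rw [e]
  exact h3

lemma sg_refl {N : ℕ} {v : Rn N} (hv : v ≠ 0) {τ : ℝ} (hτ : 0 < τ) :
    Refl N (sg v τ) {x | 2 * inner ℝ v x ≤ τ * ‖v‖ ^ 2} := by
  have hv0 : 0 < ‖v‖ := norm_pos_iff.2 hv
  have hd : ∀ x y : Rn N, ‖x - sg v τ y‖ ^ 2 = ‖x - y‖ ^ 2 +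
      (τ - 2 * inner ℝ v y / ‖v‖ ^ 2) * (τ * ‖v‖ ^ 2 - 2 * inner ℝ v x) := by
    intro x y
    have : x - sg v τ y = (x - y) - (τ - 2 * inner ℝ v y / ‖v‖ ^ 2) • v := by
      unfold sg; module
    rw [this, norm_sub_sq_real, inner_smul_right, norm_smul, mul_pow, inner_sub_left,
      real_inner_comm v x, real_inner_comm v y]
    simp only [Real.norm_eq_abs, sq_abs]
    field_simp
    ring
  have hb : ∀ y, (τ - 2 * inner ℝ v y / ‖v‖ ^ 2) = (τ * ‖v‖ ^ 2 - 2 * inner ℝ v y) / ‖v‖ ^ 2 := by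
    intro y; field_simp
  have hinv : ∀ x, sg v τ (sg v τ x) = x := by
    intro x
    have h1 := sg_inner hv τ x
    unfold sg at h1 ⊢
    rw [h1]
    have : (τ - 2 * (τ * ‖v‖ ^ 2 - inner ℝ v x) / ‖v‖ ^ 2) = - (τ - 2 * inner ℝ v x / ‖v‖ ^ 2) := by
      field_simp; ring
    rw [this]; module
  have hn : ∀ x, ‖sg v τ x‖ ^ 2 = ‖x‖ ^ 2 + (τ - 2 * inner ℝ v x / ‖v‖ ^ 2) * (τ * ‖v‖ ^ 2) := by
    intro x
    have := hd 0 x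
    simpa using this
  refine ⟨sg_mp hv τ, hinv, ?_, ?_, ?_, ?_, ?_, ?_, ?_⟩
  · intro x y
    rw [edist_dist, edist_dist, dist_eq_norm, dist_eq_norm]
    congr 1
    rw [← sq_eq_sq₀ (norm_nonneg _) (norm_nonneg _), hd, norm_sub_rev, hd, norm_sub_rev,
      sg_inner hv]
    field_simp
    ring
  · intro x
    simp only [Set.mem_ofPred_eq, sg_inner hv]
    by_contra! hh
    linarith
  · intro x h1 h2
    simp only [Set.mem_ofPred_eq, sg_inner hv] at h1 h2
    have : τ * ‖v‖ ^ 2 - 2 * inner ℝ v x = 0 := by linarith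
    have h3 := hb x
    rw [this, zero_div] at h3
    unfold sg
    rw [h3]; simp
  · intro x y hx hy
    simp only [Set.mem_ofPred_eq] at hx hy
    rw [edist_dist, edist_dist, dist_eq_norm, dist_eq_norm]
    apply ENNReal.ofReal_le_ofReal
    apply le_of_sq_le_sq _ (norm_nonneg _)
    rw [hd, hb]
    have : 0 ≤ (τ * ‖v‖ ^ 2 - 2 * inner ℝ v y) / ‖v‖ ^ 2 * (τ * ‖v‖ ^ 2 - 2 * inner ℝ v x) :=
      mul_nonneg (div_nonneg (by linarith) (by positivity)) (by linarith)
    linarith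
  · intro x hx
    simp only [Set.mem_ofPred_eq] at hx
    apply le_of_sq_le_sq _ (norm_nonneg _)
    rw [hn, hb]
    have : 0 ≤ (τ * ‖v‖ ^ 2 - 2 * inner ℝ v x) / ‖v‖ ^ 2 * (τ * ‖v‖ ^ 2) :=
      mul_nonneg (div_nonneg (by linarith) (by positivity)) (by positivity)
    linarith
  · intro x hx
    simp only [Set.mem_ofPred_eq]
    by_contra! hh
    have h1 := hn x
    rw [hb] at h1
    have h2 : ‖x‖ ^ 2 < ‖sg v τ x‖ ^ 2 := by gcongr
    have : (τ * ‖v‖ ^ 2 - 2 * inner ℝ v x) / ‖v‖ ^ 2 * (τ * ‖v‖ ^ 2) ≤ 0 :=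
      mul_nonpos_of_nonpos_of_nonneg (div_nonpos_of_nonpos_of_nonneg (by linarith) (by positivity)) (by positivity)
    linarith
  · apply measurableSet_le <;> fun_prop

/-- If a reflection moves a point away from the origin then `τ > 0`. -/
lemma sg_pos {N : ℕ} {v : Rn N} {τ : ℝ} {x : Rn N}
    (ht : 0 < τ - 2 * inner ℝ v x / ‖v‖ ^ 2) (h : ‖x‖ < ‖sg v τ x‖) : 0 < τ := by
  by_cases hv : v = 0
  · subst hv; simpa using ht
  have hv0 : 0 < ‖v‖ := norm_pos_iff.2 hv
  set b := τ - 2 * inner ℝ v x / ‖v‖ ^ 2 with hb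
  have e : ‖sg v τ x‖ ^ 2 = ‖x‖ ^ 2 + b * (τ * ‖v‖ ^ 2) := by
    unfold sg
    rw [← hb, norm_add_sq_real, inner_smul_right, norm_smul, mul_pow, real_inner_comm]
    simp only [Real.norm_eq_abs, sq_abs]
    rw [hb]
    field_simp
    ring
  have h2 : ‖x‖ ^ 2 < ‖sg v τ x‖ ^ 2 := by gcongr
  have h3 : 0 < b * (τ * ‖v‖ ^ 2) := by linarith
  have h4 := (pos_iff_pos_of_mul_pos h3).1 ht
  exact pos_of_mul_pos_left h4 (by positivity)

lemma lint_affine {N : ℕ} {ρ : ℝ} (hρ : 0 < ρ) (x : Rn N) {f : Rn N → ℝ≥0∞} (hf : Measurable f) :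
    ∫⁻ y, f y = ENNReal.ofReal (ρ ^ N) * ∫⁻ v, f (x + ρ • v) := by
  have h1 : ∫⁻ y, f y = ∫⁻ y, f (x + y) := (lintegral_add_left_eq_self f x).symm
  have h2 := Measure.map_addHaar_smul (volume : Measure (Rn N)) hρ.ne'
  have h3 : ∫⁻ v, f (x + ρ • v) = ∫⁻ y, f (x + y) ∂(Measure.map (ρ • ·) (volume : Measure (Rn N))) := by
    rw [lintegral_map (by fun_prop) (by fun_prop)]
  rw [h1, h3, h2, lintegral_smul_measure, smul_eq_mul, ← mul_assoc, ← ENNReal.ofReal_mul (by positivity)]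
  have : ρ ^ N * |(ρ ^ Module.finrank ℝ (Rn N))⁻¹| = 1 := by
    rw [finrank_euclideanSpace_fin, abs_of_pos (by positivity)]
    field_simp
  rw [this]; simp

lemma sg_meas {N : ℕ} : Measurable (fun p : Rn N × (ℝ × Rn N) => sg p.2.2 p.2.1 p.1) := by
  unfold sg
  apply Measurable.add measurable_fst
  refine Measurable.fun_smul ?_ (by fun_prop)
  apply Measurable.sub (by fun_prop)
  apply Measurable.div
  · apply Measurable.const_mul
    exact Measurable.inner (by fun_prop) (by fun_prop)
  · fun_prop

/-- Lower bound for the average over reflections, for a fixed point `x`. -/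
lemma avg_point {N : ℕ} {r M δ : ℝ} (hδ : 0 < δ) {C : Set (Rn N)} (hC : MeasurableSet C)
    (hCM : C ⊆ Metric.ball 0 M) {x : Rn N} (hx : ‖x‖ < r) (hrM : r ≤ M)
    (hCr : ∀ y ∈ C, r ≤ ‖y‖) :
    volume (C \ Metric.ball x (2 * δ)) ≤ ENNReal.ofReal (2 ^ N) *
      ∫⁻ τ in Set.Ioc 0 (2 + 2 * r / δ), ∫⁻ v in (Metric.ball (0 : Rn N) (2 * M) \ {0}),
        C.indicator 1 (sg v τ x) := by
  classical
  set V := (Metric.ball (0 : Rn N) (2 * M) \ Metric.ball 0 δ) with hV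
  set V' := (Metric.ball (0 : Rn N) (2 * M) \ {0}) with hV'
  have hVm : MeasurableSet V := measurableSet_ball.diff measurableSet_ball
  have hVm' : MeasurableSet V' := measurableSet_ball.diff (measurableSet_singleton _)
  have hind : Measurable (C.indicator (1 : Rn N → ℝ≥0∞)) := measurable_one.indicator hC
  -- step 1 : fixed ρ
  have s1 : ∀ ρ ∈ Set.Ioc (1 : ℝ) 2, volume (C \ Metric.ball x (2 * δ)) ≤
      ENNReal.ofReal (2 ^ N) * ∫⁻ v in V, C.indicator 1 (x + ρ • v) := by
    intro ρ hρ
    have hρ0 : 0 < ρ := by linarith [hρ.1]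
    have hm : MeasurableSet (C \ Metric.ball x (2 * δ)) := hC.diff measurableSet_ball
    rw [← lintegral_indicator_one hm, lint_affine hρ0 x (measurable_one.indicator hm),
      ← lintegral_indicator hVm]
    gcongr with v
    · exact hρ.2
    · simp only [Set.indicator_apply]
      by_cases h1 : x + ρ • v ∈ C \ Metric.ball x (2 * δ)
      · have h2 : ‖ρ • v‖ = ρ * ‖v‖ := by rw [norm_smul, Real.norm_eq_abs, abs_of_pos hρ0]
        have h3 : 2 * δ ≤ ρ * ‖v‖ := by
          have := h1.2
          simp only [Metric.mem_ball, dist_eq_norm, add_sub_cancel_left, h2, not_lt] at this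
          exact this
        have h4 : ρ * ‖v‖ < 2 * M := by
          have h5 := hCM h1.1
          rw [mem_ball_zero_iff] at h5
          have h6 : ‖ρ • v‖ ≤ ‖x + ρ • v‖ + ‖x‖ := by
            have := norm_sub_le (x + ρ • v) x
            simpa using this
          linarith
        have h7 : v ∈ V := by
          refine ⟨?_, ?_⟩
          · rw [mem_ball_zero_iff]
            nlinarith [norm_nonneg v, hρ.1]
          · rw [mem_ball_zero_iff, not_lt]
            nlinarith [norm_nonneg v, hρ.2]
        rw [if_pos h1, if_pos h7, if_pos h1.1]
      · rw [if_neg h1]; exact zero_le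
  -- step 2 : average in ρ
  have s2 : volume (C \ Metric.ball x (2 * δ)) ≤ ENNReal.ofReal (2 ^ N) *
      ∫⁻ ρ in Set.Ioc (1 : ℝ) 2, ∫⁻ v in V, C.indicator 1 (x + ρ • v) := by
    have h1 : ∫⁻ ρ in Set.Ioc (1 : ℝ) 2, volume (C \ Metric.ball x (2 * δ)) ≤
        ∫⁻ ρ in Set.Ioc (1 : ℝ) 2, ENNReal.ofReal (2 ^ N) * ∫⁻ v in V, C.indicator 1 (x + ρ • v) :=
      setLIntegral_mono' measurableSet_Ioc s1
    rw [lintegral_const_mul' _ _ (by simp)] at h1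
    simp only [lintegral_const, MeasurableSet.univ, Measure.restrict_apply, Set.univ_inter,
      Real.volume_Ioc] at h1
    norm_num at h1
    simpa using h1
  refine s2.trans ?_
  refine mul_le_mul_right ?_ _
  have w1 : ∫⁻ ρ in Set.Ioc (1 : ℝ) 2, ∫⁻ v in V, C.indicator (1 : Rn N → ℝ≥0∞) (x + ρ • v) =
      ∫⁻ v in V, ∫⁻ ρ in Set.Ioc (1 : ℝ) 2, C.indicator 1 (x + ρ • v) := by
    apply lintegral_lintegral_swap
    apply Measurable.aemeasurable
    apply hind.comp
    fun_prop
  have w2 : ∫⁻ τ in Set.Ioc 0 (2 + 2 * r / δ), ∫⁻ v in V', C.indicator (1 : Rn N → ℝ≥0∞) (sg v τ x) =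
      ∫⁻ v in V', ∫⁻ τ in Set.Ioc 0 (2 + 2 * r / δ), C.indicator 1 (sg v τ x) := by
    apply lintegral_lintegral_swap
    apply Measurable.aemeasurable
    exact hind.comp (sg_meas.comp (measurable_const.prodMk measurable_id))
  rw [w1, w2]
  have hVV : V ⊆ V' := by
    intro v hv
    refine ⟨hv.1, ?_⟩
    rintro rfl
    exact hv.2 (by simpa using hδ)
  refine le_trans ?_ (lintegral_mono_set hVV)
  refine setLIntegral_mono' hVm ?_
  intro v hv
  have hvδ : δ ≤ ‖v‖ := by
    have := hv.2
    rwa [mem_ball_zero_iff, not_lt] at this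
  set c := 2 * inner ℝ v x / ‖v‖ ^ 2 with hc
  rw [← lintegral_indicator measurableSet_Ioc, ← lintegral_indicator measurableSet_Ioc,
    ← lintegral_sub_right_eq_self _ c]
  refine lintegral_mono ?_
  intro τ
  simp only [Set.indicator_apply]
  by_cases h1 : τ - c ∈ Set.Ioc (1 : ℝ) 2
  · by_cases h2 : x + (τ - c) • v ∈ C
    · have h3 : sg v τ x = x + (τ - c) • v := rfl
      have h4 : 0 < τ := by
        apply sg_pos (v := v) (x := x)
        · rw [← hc]; linarith [h1.1]
        · rw [h3]; linarith [hCr _ h2]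
      have h5 : c ≤ 2 * r / δ := by
        have hn : |inner ℝ v x| ≤ ‖v‖ * ‖x‖ := abs_real_inner_le_norm v x
        have hv0 : 0 < ‖v‖ := by linarith
        have hr0 : 0 < r := lt_of_le_of_lt (norm_nonneg x) hx
        calc c ≤ 2 * (‖v‖ * r) / ‖v‖ ^ 2 := by
              rw [hc]; gcongr
              exact (le_abs_self _).trans (hn.trans (by gcongr))
          _ = 2 * r / ‖v‖ := by field_simp
          _ ≤ 2 * r / δ := by gcongr
      have h6 : τ ∈ Set.Ioc 0 (2 + 2 * r / δ) := ⟨h4, by linarith [h1.2]⟩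
      rw [if_pos h1, if_pos h2, if_pos h6, h3, if_pos h2]
    · rw [if_neg h2]; simp
  · rw [if_neg h1]; exact zero_le

lemma avg_exists {N : ℕ} {r M δ : ℝ} (hδ : 0 < δ) {A C : Set (Rn N)} (hA : MeasurableSet A)
    (hC : MeasurableSet C) (hAr : A ⊆ Metric.ball 0 r)
    (hCM : C ⊆ Metric.ball 0 M) (hrM : r ≤ M)
    (hCr : ∀ y ∈ C, r ≤ ‖y‖) {b η : ℝ≥0∞}
    (hb : ∀ x ∈ A, b ≤ volume (C \ Metric.ball x (2 * δ)))
    (hη : ∀ (v : Rn N) (τ : ℝ), v ≠ 0 → 0 < τ → volume {x | x ∈ A ∧ sg v τ x ∈ C} ≤ η) :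
    b * volume A ≤ ENNReal.ofReal (2 ^ N) * (η * volume (Metric.ball (0 : Rn N) (2 * M)) *
      ENNReal.ofReal (2 + 2 * r / δ)) := by
  have hind : Measurable (C.indicator (1 : Rn N → ℝ≥0∞)) := measurable_one.indicator hC
  set V' := (Metric.ball (0 : Rn N) (2 * M) \ {0}) with hV'
  have hVm' : MeasurableSet V' := measurableSet_ball.diff (measurableSet_singleton _)
  have hjm : Measurable (fun p : Rn N × (ℝ × Rn N) => C.indicator (1 : Rn N → ℝ≥0∞) (sg p.2.2 p.2.1 p.1)) :=
    hind.comp sg_meas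
  calc b * volume A = ∫⁻ x in A, b := by simp
    _ ≤ ∫⁻ x in A, ENNReal.ofReal (2 ^ N) *
      ∫⁻ τ in Set.Ioc 0 (2 + 2 * r / δ), ∫⁻ v in V', C.indicator 1 (sg v τ x) := by
        refine setLIntegral_mono' hA fun x hx => (hb x hx).trans ?_
        have := hAr hx
        rw [mem_ball_zero_iff] at this
        exact avg_point hδ hC hCM this hrM hCr
    _ = ENNReal.ofReal (2 ^ N) * ∫⁻ τ in Set.Ioc 0 (2 + 2 * r / δ), ∫⁻ v in V', ∫⁻ x in A,
          C.indicator 1 (sg v τ x) := by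
        rw [lintegral_const_mul' _ _ (by simp), lintegral_lintegral_swap]
        · congr 1
          refine lintegral_congr fun τ => ?_
          rw [lintegral_lintegral_swap]
          apply Measurable.aemeasurable
          exact hjm.comp (measurable_fst.prodMk (measurable_const.prodMk measurable_snd))
        · apply Measurable.aemeasurable
          have : Measurable (fun q : (Rn N × ℝ) × Rn N => C.indicator (1 : Rn N → ℝ≥0∞) (sg q.2 q.1.2 q.1.1)) :=
            hjm.comp (by fun_prop : Measurable (fun q : (Rn N × ℝ) × Rn N => (q.1.1, (q.1.2, q.2))))
          exact this.lintegral_prod_right'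
    _ ≤ ENNReal.ofReal (2 ^ N) * ∫⁻ τ in Set.Ioc 0 (2 + 2 * r / δ), ∫⁻ v in V', η := by
        gcongr 1
        refine setLIntegral_mono' measurableSet_Ioc fun τ hτ => ?_
        refine setLIntegral_mono' hVm' fun v hv => ?_
        refine le_trans (le_of_eq ?_) (hη v τ hv.2 hτ.1)
        have hm : Measurable (sg v τ) :=
          sg_meas.comp (measurable_id.prodMk (measurable_const (a := (τ, v))))
        rw [← lintegral_indicator hA, ← lintegral_indicator_one]
        · refine lintegral_congr fun x => ?_
          by_cases h1 : x ∈ A <;> by_cases h2 : sg v τ x ∈ C <;> simp [h1, h2]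
        · exact hA.inter (hm hC)
    _ ≤ _ := by
        gcongr 1
        simp only [lintegral_const, MeasurableSet.univ, Measure.restrict_apply, Set.univ_inter,
          Real.volume_Ioc, sub_zero]
        gcongr
        exact Set.sdiff_subset

lemma exists_M {N : ℕ} {E : Set (Rn N)} (hE : MeasurableSet E) (hfin : volume E ≠ ⊤) (r : ℝ)
    {c : ℝ≥0∞} (hc : c ≠ 0) : ∃ M, r ≤ M ∧ volume (E \ Metric.ball 0 M) ≤ c := by
  have h := tendsto_measure_iInter_atTop (μ := (volume : Measure (Rn N)))
    (s := fun n : ℕ => E \ Metric.ball 0 (n : ℝ))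
    (fun n => (hE.diff measurableSet_ball).nullMeasurableSet)
    (fun m n hmn => Set.sdiff_subset_sdiff_right (Metric.ball_subset_ball (by exact_mod_cast hmn)))
    ⟨0, measure_ne_top_of_subset Set.sdiff_subset hfin⟩
  have he : ⋂ n : ℕ, E \ Metric.ball (0 : Rn N) (n : ℝ) = ∅ := by
    ext x
    simp only [Set.mem_iInter, Set.mem_sdiff, mem_ball_zero_iff, Set.mem_empty_iff_false, iff_false,
      not_forall]
    obtain ⟨n, hn⟩ := exists_nat_gt ‖x‖
    exact ⟨n, fun h => h.2 hn⟩
  rw [he, measure_empty] at h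
  have h1 := h.eventually_lt_const (pos_iff_ne_zero.2 hc)
  obtain ⟨k, hk⟩ := exists_nat_ge r
  obtain ⟨n, hn, hn2⟩ := (h1.and (Filter.eventually_ge_atTop k)).exists
  exact ⟨n, hk.trans (by exact_mod_cast hn2), hn.le⟩

lemma exists_δ {N : ℕ} (hN : 1 ≤ N) {c : ℝ≥0∞} (hc : c ≠ 0) :
    ∃ δ : ℝ, 0 < δ ∧ ∀ x : Rn N, volume (Metric.ball x (2 * δ)) ≤ c := by
  have h : Filter.Tendsto (fun δ : ℝ => ENNReal.ofReal ((2 * δ) ^ N) *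
      volume (Metric.ball (0 : Rn N) 1)) (nhdsWithin 0 (Set.Ioi 0))
      (nhds (ENNReal.ofReal ((2 * 0) ^ N) * volume (Metric.ball (0 : Rn N) 1))) := by
    apply ENNReal.Tendsto.mul_const
    · apply ENNReal.tendsto_ofReal
      apply Filter.Tendsto.mono_left _ nhdsWithin_le_nhds
      exact Continuous.tendsto (by fun_prop) 0
    · right; exact measure_ball_lt_top.ne
  have h0 : ENNReal.ofReal ((2 * (0 : ℝ)) ^ N) * volume (Metric.ball (0 : Rn N) 1) = 0 := by
    rw [mul_zero, zero_pow (by omega)]; simp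
  rw [h0] at h
  obtain ⟨δ, hδ, hδ2⟩ := ((h.eventually_lt_const (pos_iff_ne_zero.2 hc)).and
    self_mem_nhdsWithin).exists
  have hδ3 : 0 < δ := hδ2
  refine ⟨δ, hδ3, fun x => ?_⟩
  rw [Measure.addHaar_ball_of_pos _ x (by positivity), finrank_euclideanSpace_fin]
  exact hδ.le

lemma diff_symm {N : ℕ} {E B : Set (Rn N)} (hE : MeasurableSet E) (hB : MeasurableSet B)
    (h : volume E = volume B) (hfin : volume B ≠ ⊤) : volume (E \ B) = volume (B \ E) := by
  have h1 := measure_inter_add_sdiff (μ := volume) E hB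
  have h2 := measure_inter_add_sdiff (μ := volume) B hE
  rw [Set.inter_comm, ← h, ← h1] at h2
  have : volume (E ∩ B) ≠ ⊤ := measure_ne_top_of_subset Set.inter_subset_right hfin
  exact ((ENNReal.add_right_inj this).1 h2).symm

/-- Class of admissible rearrangements. -/
def Adm (N : ℕ) (s r : ℝ) (E F : Set (Rn N)) : Prop :=
  MeasurableSet F ∧ volume F = volume (Metric.ball (0 : Rn N) r) ∧ FP N s F ≤ FP N s E ∧
    ∀ M : ℝ, volume (F \ Metric.ball 0 M) ≤ volume (E \ Metric.ball 0 M)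

lemma adm_small {N : ℕ} (hN : 1 ≤ N) {s r : ℝ} (hs : 0 < s) {E : Set (Rn N)}
    (hE : MeasurableSet E) (hv : volume E = volume (Metric.ball (0 : Rn N) r))
    {ε : ℝ≥0∞} (hε : ε ≠ 0) : ∃ F, Adm N s r E F ∧ volume (Metric.ball 0 r \ F) < ε := by
  by_contra! hcon
  have hBfin : volume (Metric.ball (0 : Rn N) r) ≠ ⊤ := measure_ball_lt_top.ne
  set a := ⨅ F, ⨅ _ : Adm N s r E F, volume (Metric.ball 0 r \ F) with ha
  have hle : ∀ F, Adm N s r E F → a ≤ volume (Metric.ball 0 r \ F) := fun F hF => iInf₂_le F hF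
  have ha0 : a ≠ 0 := by
    have : ε ≤ a := le_iInf₂ hcon
    intro h; rw [h] at this; exact hε (le_zero_iff.1 this)
  have haT : a ≠ ⊤ := by
    have := hle E ⟨hE, hv, le_rfl, fun _ => le_rfl⟩
    exact ne_top_of_le_ne_top (measure_ne_top_of_subset Set.sdiff_subset hBfin) this
  obtain ⟨M, hrM, hM⟩ := exists_M hE (hv ▸ hBfin) r (c := a / 2) (by simpa using ha0)
  obtain ⟨δ, hδ, hδ2⟩ := exists_δ hN (c := a / 4) (ENNReal.div_ne_zero.2 ⟨ha0, by simp⟩)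
  have hKfin : ENNReal.ofReal (2 ^ N) * (volume (Metric.ball (0 : Rn N) (2 * M)) *
      ENNReal.ofReal (2 + 2 * r / δ)) ≠ ⊤ := by
    refine ENNReal.mul_ne_top (by simp) (ENNReal.mul_ne_top measure_ball_lt_top.ne (by simp))
  obtain ⟨η, hη0, hη⟩ := ENNReal.exists_nnreal_pos_mul_lt hKfin
    (b := a / 4 * a) (mul_ne_zero (ENNReal.div_ne_zero.2 ⟨ha0, by simp⟩) ha0)
  have hlt : a < a + η := ENNReal.lt_add_right haT (by exact_mod_cast hη0.ne')
  obtain ⟨F, hF⟩ := iInf_lt_iff.1 (lt_of_eq_of_lt ha.symm hlt)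
  obtain ⟨hF1, hF2⟩ := iInf_lt_iff.1 hF
  obtain ⟨hFm, hFv, hFP, hFM⟩ := hF1
  have hC : MeasurableSet ((F \ Metric.ball 0 r) ∩ Metric.ball 0 M) :=
    (hFm.diff measurableSet_ball).inter measurableSet_ball
  have hA : MeasurableSet (Metric.ball 0 r \ F) := measurableSet_ball.diff hFm
  have hex : ∃ (v : Rn N) (τ : ℝ), v ≠ 0 ∧ 0 < τ ∧ (η : ℝ≥0∞) <
      volume {x | x ∈ Metric.ball 0 r \ F ∧ sg v τ x ∈ (F \ Metric.ball 0 r) ∩ Metric.ball 0 M} := by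
    by_contra! hno
    have := avg_exists hδ hA hC Set.sdiff_subset Set.inter_subset_right hrM
      (fun y hy => by simpa using hy.1.2) (b := a / 4) (η := η) ?_ hno
    · have h1 : a / 4 * a ≤ a / 4 * volume (Metric.ball 0 r \ F) := by
        gcongr; exact hle F ⟨hFm, hFv, hFP, hFM⟩
      have h2 := (h1.trans this).trans_lt' hη
      apply lt_irrefl _ (lt_of_lt_of_eq h2 _)
      ring
    · intro x hx
      have h1 : a ≤ volume (F \ Metric.ball 0 r) := by
        rw [diff_symm hFm measurableSet_ball hFv hBfin]
        exact hle F ⟨hFm, hFv, hFP, hFM⟩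
      have h2 : volume (F \ Metric.ball 0 r) ≤
          volume (((F \ Metric.ball 0 r) ∩ Metric.ball 0 M) \ Metric.ball x (2 * δ)) +
          (a / 2 + a / 4) := by
        calc _ ≤ volume ((((F \ Metric.ball 0 r) ∩ Metric.ball 0 M) \ Metric.ball x (2 * δ)) ∪
              ((F \ Metric.ball 0 M) ∪ Metric.ball x (2 * δ))) := by
              apply measure_mono
              intro y hy
              by_cases h1 : y ∈ Metric.ball 0 M <;> by_cases h2 : y ∈ Metric.ball x (2 * δ) <;>
                simp only [Set.mem_union, Set.mem_sdiff, Set.mem_inter_iff, h1, h2, hy.1, hy.2] <;> simp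
          _ ≤ _ := by
              refine (measure_union_le _ _).trans ?_
              gcongr
              refine (measure_union_le _ _).trans ?_
              exact add_le_add ((hFM M).trans hM) (hδ2 x)
      have h3 := h1.trans h2
      by_contra! h4
      generalize volume (((F \ Metric.ball 0 r) ∩ Metric.ball 0 M) \ Metric.ball x (2 * δ)) = w at *
      have hw : w ≠ ⊤ := h4.ne_top
      lift w to NNReal using hw
      clear_value a
      lift a to NNReal using haT
      have e4 : ((a : ℝ≥0∞) / 4) = ((a / 4 : NNReal) : ℝ≥0∞) := by
        rw [ENNReal.coe_div (by simp)]; simp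
      have e2 : ((a : ℝ≥0∞) / 2) = ((a / 2 : NNReal) : ℝ≥0∞) := by
        rw [ENNReal.coe_div (by simp)]; simp
      rw [e4] at h4 h3
      rw [e2] at h3
      norm_cast at h3 h4
      have h3' : (a : ℝ) ≤ w + (a / 2 + a / 4) := by exact_mod_cast h3
      have h4' : (w : ℝ) < a / 4 := by exact_mod_cast h4
      linarith
  obtain ⟨v, τ, hv0, hτ, hbig⟩ := hex
  have R := sg_refl hv0 hτ
  set H : Set (Rn N) := {x | 2 * inner ℝ v x ≤ τ * ‖v‖ ^ 2}
  have hg := pol_gain R hFm r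
  have hadm : Adm N s r E (pol (sg v τ) H F) :=
    ⟨pol_meas R hFm, (pol_vol R hFm).trans hFv, (pol_FP hs R hFm).trans hFP,
      fun M => (pol_out R hFm M).trans (hFM M)⟩
  have h1 := hle _ hadm
  have h2 : volume {x | x ∈ Metric.ball 0 r \ F ∧ sg v τ x ∈ (F \ Metric.ball 0 r) ∩ Metric.ball 0 M}
      ≤ volume {x | x ∈ Metric.ball 0 r \ F ∧ sg v τ x ∈ F \ Metric.ball 0 r} :=
    measure_mono fun x hx => ⟨hx.1, hx.2.1⟩
  have h3 : a + η ≤ volume (Metric.ball 0 r \ F) :=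
    (add_le_add h1 (hbig.le.trans h2)).trans hg
  exact absurd hF2 (not_lt.2 h3)

lemma iso_ball {N : ℕ} (hN : 1 ≤ N) {s r : ℝ} (hs : 0 < s) {E : Set (Rn N)}
    (hE : MeasurableSet E) (hv : volume E = volume (Metric.ball (0 : Rn N) r)) :
    FP N s (Metric.ball 0 r) ≤ FP N s E := by
  classical
  have hBfin : volume (Metric.ball (0 : Rn N) r) ≠ ⊤ := measure_ball_lt_top.ne
  choose F hF hFs using fun n : ℕ => adm_small hN hs hE hv (ε := (2⁻¹ : ℝ≥0∞) ^ n)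
    (by simp)
  set B := Metric.ball (0 : Rn N) r with hB
  have hd : ∀ n, volume ((F n \ B) ∪ (B \ F n)) ≤ 2 * (2⁻¹ : ℝ≥0∞) ^ n := by
    intro n
    refine (measure_union_le _ _).trans ?_
    rw [diff_symm (hF n).1 measurableSet_ball (hF n).2.1 hBfin, ← two_mul]
    gcongr
    exact (hFs n).le
  have hsum : ∑' n, volume ((F n \ B) ∪ (B \ F n)) ≠ ⊤ := by
    refine ne_top_of_le_ne_top ?_ (ENNReal.tsum_le_tsum hd)
    rw [ENNReal.tsum_mul_left, ENNReal.tsum_geometric]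
    apply ENNReal.mul_ne_top (by simp)
    simp
  have hae : ∀ᵐ x ∂(volume : Measure (Rn N)), ∀ᶠ n in Filter.atTop, (x ∈ F n ↔ x ∈ B) := by
    filter_upwards [ae_eventually_notMem hsum] with x hx
    filter_upwards [hx] with n hn
    simp only [Set.mem_union, Set.mem_sdiff] at hn
    tauto
  calc FP N s B ≤ ∫⁻ x, Filter.liminf (fun n => ∫⁻ y, fpD N s (F n) x y) Filter.atTop := by
        apply lintegral_mono_ae
        filter_upwards [hae] with x hx
        refine le_trans ?_ (lintegral_liminf_le fun n => fpD_meas_right N s (hF n).1 x)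
        apply lintegral_mono_ae
        filter_upwards [hae] with y hy
        refine Filter.le_liminf_of_le (by isBoundedDefault) ?_
        filter_upwards [hx, hy] with n h1 h2
        simp only [fpD, h1, h2]; exact le_rfl
    _ ≤ Filter.liminf (fun n => FP N s (F n)) Filter.atTop :=
        lintegral_liminf_le fun n => fpD_meas_int N s (hF n).1
    _ ≤ FP N s E := by
        refine (Filter.liminf_le_liminf (Filter.Eventually.of_forall fun n => (hF n).2.2.1)).trans ?_
        simp

lemma FP_ball {N : ℕ} {s r : ℝ} (hr : 0 < r) (x : Rn N) :
    FP N s (Metric.ball x r) = ENNReal.ofReal (r ^ ((N : ℝ) - s)) * FP N s (Metric.ball 0 1) := by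
  have hm : MeasurableSet (Metric.ball x r) := measurableSet_ball
  have key : ∀ a b, fpD N s (Metric.ball x r) (x + r • a) (x + r • b) =
      ENNReal.ofReal (r ^ (-((N : ℝ) + s))) * fpD N s (Metric.ball 0 1) a b := by
    intro a b
    have hmem : ∀ a, x + r • a ∈ Metric.ball x r ↔ a ∈ Metric.ball (0 : Rn N) 1 := by
      intro a
      rw [Metric.mem_ball, dist_eq_norm, add_sub_cancel_left, norm_smul, mem_ball_zero_iff,
        Real.norm_eq_abs, abs_of_pos hr]
      constructor
      · intro h; nlinarith
      · intro h; nlinarith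
    have hk : fpK N s (x + r • a) (x + r • b) =
        ENNReal.ofReal (r ^ (-((N : ℝ) + s))) * fpK N s a b := by
      unfold fpK
      rw [edist_add_left, edist_dist, dist_smul₀, Real.norm_eq_abs, abs_of_pos hr,
        ENNReal.ofReal_mul hr.le, ENNReal.mul_rpow_of_ne_top (by simp) (by simp), ← edist_dist,
        ENNReal.ofReal_rpow_of_pos hr]
    unfold fpD
    rw [hmem a, hmem b, hk]
    split_ifs <;> simp
  unfold FP
  rw [lint_affine hr x (fpD_meas_int N s hm)]
  have : ∀ a, ∫⁻ y, fpD N s (Metric.ball x r) (x + r • a) y =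
      ENNReal.ofReal (r ^ N) * ENNReal.ofReal (r ^ (-((N : ℝ) + s))) *
        ∫⁻ y, fpD N s (Metric.ball 0 1) a y := by
    intro a
    rw [lint_affine hr x (fpD_meas_right N s hm _), mul_assoc]
    simp only [key]
    rw [lintegral_const_mul' _ _ (by simp)]
  simp only [this]
  rw [lintegral_const_mul' _ _ (ENNReal.mul_ne_top (by simp) (by simp)), ← mul_assoc, ← mul_assoc,
    ← ENNReal.ofReal_mul (by positivity), ← ENNReal.ofReal_mul (by positivity)]
  congr 2
  rw [← Real.rpow_natCast, ← Real.rpow_add hr, ← Real.rpow_add hr]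
  congr 1; ring

lemma iso_gen {N : ℕ} (hN : 1 ≤ N) {s : ℝ} (hs : 0 < s) (hs1 : s < 1) {E : Set (Rn N)}
    (hE : MeasurableSet E) (hv : volume E ≠ ⊤) :
    FP N s (Metric.ball 0 1) * volume E ^ (((N : ℝ) - s) / N) ≤
      volume (Metric.ball (0 : Rn N) 1) ^ (((N : ℝ) - s) / N) * FP N s E := by
  have hN' : (1 : ℝ) ≤ N := by exact_mod_cast hN
  have hθ : 0 < ((N : ℝ) - s) / N := div_pos (by linarith) (by linarith)
  by_cases h0 : volume E = 0
  · rw [h0, ENNReal.zero_rpow_of_pos hθ]; simp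
  set ω := volume (Metric.ball (0 : Rn N) 1) with hω
  have hω0 : ω ≠ 0 := (Metric.measure_ball_pos _ _ one_pos).ne'
  have hωT : ω ≠ ⊤ := measure_ball_lt_top.ne
  have hq : 0 < (volume E / ω).toReal := ENNReal.toReal_pos (ENNReal.div_ne_zero.2 ⟨h0, hωT⟩)
    (ENNReal.div_ne_top hv hω0)
  set r := (volume E / ω).toReal ^ (1 / (N : ℝ)) with hr
  have hr0 : 0 < r := Real.rpow_pos_of_pos hq _
  have hrN : ENNReal.ofReal (r ^ N) = volume E / ω := by
    rw [hr, ← Real.rpow_natCast, ← Real.rpow_mul hq.le, one_div_mul_cancel (by positivity),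
      Real.rpow_one, ENNReal.ofReal_toReal (ENNReal.div_ne_top hv hω0)]
  have hvol : volume E = volume (Metric.ball (0 : Rn N) r) := by
    rw [Measure.addHaar_ball_of_pos _ _ hr0, finrank_euclideanSpace_fin, hrN]
    exact (ENNReal.div_mul_cancel hω0 hωT).symm
  have h1 := iso_ball hN hs hE hvol
  rw [FP_ball hr0] at h1
  have h2 : volume E ^ (((N : ℝ) - s) / N) =
      ENNReal.ofReal (r ^ ((N : ℝ) - s)) * ω ^ (((N : ℝ) - s) / N) := by
    have : volume E = ENNReal.ofReal (r ^ N) * ω := by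
      rw [hrN]; exact (ENNReal.div_mul_cancel hω0 hωT).symm
    rw [this, ENNReal.mul_rpow_of_nonneg _ _ hθ.le, ENNReal.ofReal_rpow_of_pos (by positivity),
      ← Real.rpow_natCast, ← Real.rpow_mul hr0.le]
    congr 4
    field_simp
  rw [h2]
  calc _ = ω ^ (((N : ℝ) - s) / N) * (ENNReal.ofReal (r ^ ((N : ℝ) - s)) * FP N s (Metric.ball 0 1)) := by
        ring
    _ ≤ _ := by gcongr

lemma layer_fin {N : ℕ} {p : ℝ} (hp : 1 < p) {g : Rn N → ℝ} (hg : Measurable g)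
    (hI : ∫⁻ x, ENNReal.ofReal (g x) ^ p ≠ ⊤) :
    (∫⁻ x, ENNReal.ofReal (g x) ^ p) ^ (1 / p) ≤
      ∫⁻ t in Set.Ioi (0 : ℝ), volume {x | t < g x} ^ (1 / p) := by
  classical
  have hpq := Real.HolderConjugate.conjExponent hp
  set p' := Real.conjExponent p with hp'
  set I := ∫⁻ x, ENNReal.ofReal (g x) ^ p with hIdef
  set T := ∫⁻ t in Set.Ioi (0 : ℝ), volume {x | t < g x} ^ (1 / p) with hT
  by_cases hI0 : I = 0
  · rw [hI0, ENNReal.zero_rpow_of_pos (by positivity)]; exact zero_le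
  have hS : ∀ t : ℝ, MeasurableSet {x | t < g x} := fun t => measurableSet_lt measurable_const hg
  have hSS : MeasurableSet {q : Rn N × ℝ | q.2 < g q.1} :=
    measurableSet_lt measurable_snd (hg.comp measurable_fst)
  have hGm : Measurable (fun x => ENNReal.ofReal (g x) ^ (p - 1)) := hg.ennreal_ofReal.pow_const _
  have h1 : I = ∫⁻ x, ∫⁻ t in Set.Ioi (0 : ℝ),
      (if t < g x then 1 else 0) * ENNReal.ofReal (g x) ^ (p - 1) := by
    rw [hIdef]
    refine lintegral_congr fun x => ?_
    rw [lintegral_mul_const _ (by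
      exact Measurable.ite (measurableSet_lt measurable_id measurable_const) measurable_const measurable_const)]
    have : ∫⁻ t in Set.Ioi (0 : ℝ), (if t < g x then (1 : ℝ≥0∞) else 0) = ENNReal.ofReal (g x) := by
      rw [← lintegral_indicator measurableSet_Ioi]
      have e : (Set.Ioi (0 : ℝ)).indicator (fun t => if t < g x then (1 : ℝ≥0∞) else 0) =
          (Set.Ioo 0 (g x)).indicator 1 := by
        ext t
        by_cases h1 : 0 < t <;> by_cases h2 : t < g x <;> simp [h1, h2]
      rw [e, lintegral_indicator_one measurableSet_Ioo, Real.volume_Ioo, sub_zero]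
    rw [this]
    by_cases hz : ENNReal.ofReal (g x) = 0
    · rw [hz, ENNReal.zero_rpow_of_pos (by linarith)]; simp
    · nth_rewrite 2 [← ENNReal.rpow_one (ENNReal.ofReal (g x))]
      rw [← ENNReal.rpow_add _ _ hz (by simp)]
      congr 1; ring
  have h2 : I = ∫⁻ t in Set.Ioi (0 : ℝ), ∫⁻ x,
      (if t < g x then 1 else 0) * ENNReal.ofReal (g x) ^ (p - 1) := by
    rw [h1]
    apply lintegral_lintegral_swap
    apply Measurable.aemeasurable
    exact (Measurable.ite hSS measurable_const measurable_const).mul (hGm.comp measurable_fst)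
  have h3 : I ≤ T * I ^ (1 / p') := by
    calc I = _ := h2
      _ ≤ ∫⁻ t in Set.Ioi (0 : ℝ), volume {x | t < g x} ^ (1 / p) * I ^ (1 / p') := by
        refine lintegral_mono fun t => ?_
        have hH := ENNReal.lintegral_mul_le_Lp_mul_Lq (volume : Measure (Rn N)) hpq
          (f := fun x => if t < g x then (1 : ℝ≥0∞) else 0)
          (g := fun x => ENNReal.ofReal (g x) ^ (p - 1))
          (Measurable.ite (hS t) measurable_const measurable_const).aemeasurable hGm.aemeasurable
        refine hH.trans (le_of_eq ?_)
        congr 2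
        · rw [← lintegral_indicator_one (hS t)]
          refine lintegral_congr fun x => ?_
          by_cases h : t < g x
          · simp [h]
          · simp [h, ENNReal.zero_rpow_of_pos (show 0 < p by linarith)]
        · refine lintegral_congr fun x => ?_
          rw [← ENNReal.rpow_mul, hpq.sub_one_mul_conj]
      _ = T * I ^ (1 / p') := by
        rw [lintegral_mul_const' _ _ (ENNReal.rpow_ne_top_of_nonneg (by
          have := hpq.symm.pos; positivity) hI)]
  have h4 : I = I ^ (1 / p) * I ^ (1 / p') := by
    rw [← ENNReal.rpow_add _ _ hI0 hI, one_div, one_div, hpq.inv_add_inv_eq_one, ENNReal.rpow_one]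
  have h5 : I ^ (1 / p) * I ^ (1 / p') ≤ T * I ^ (1 / p') := h4 ▸ h3
  refine (ENNReal.mul_le_mul_iff_left ?_ ?_).1 h5
  · simp [ENNReal.rpow_eq_zero_iff, hI0, hI]
  · exact ENNReal.rpow_ne_top_of_nonneg (by have := hpq.symm.pos; positivity) hI

lemma layer {N : ℕ} {p : ℝ} (hp : 1 < p) {g : Rn N → ℝ} (hg : Measurable g)
    (hI : ∫⁻ x, ENNReal.ofReal (g x) ≠ ⊤) :
    (∫⁻ x, ENNReal.ofReal (g x) ^ p) ^ (1 / p) ≤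
      ∫⁻ t in Set.Ioi (0 : ℝ), volume {x | t < g x} ^ (1 / p) := by
  have hp0 : 0 < p := by linarith
  set T := ∫⁻ t in Set.Ioi (0 : ℝ), volume {x | t < g x} ^ (1 / p) with hT
  have hgn : ∀ n : ℕ, Measurable (fun x => min (g x) n) := fun n => hg.min measurable_const
  have hn : ∀ n : ℕ, ∫⁻ x, ENNReal.ofReal (min (g x) n) ^ p ≤ T ^ p := by
    intro n
    have hfin : ∫⁻ x, ENNReal.ofReal (min (g x) n) ^ p ≠ ⊤ := by
      have : ∫⁻ x, ENNReal.ofReal (min (g x) n) ^ p ≤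
          ∫⁻ x, (n : ℝ≥0∞) ^ (p - 1) * ENNReal.ofReal (g x) := by
        refine lintegral_mono fun x => ?_
        calc ENNReal.ofReal (min (g x) n) ^ p
            = ENNReal.ofReal (min (g x) n) ^ (p - 1) * ENNReal.ofReal (min (g x) n) ^ (1 : ℝ) := by
              rw [← ENNReal.rpow_add_of_nonneg _ _ (by linarith) (by linarith)]
              congr 1; ring
          _ ≤ _ := by
              rw [ENNReal.rpow_one]
              refine mul_le_mul' (ENNReal.rpow_le_rpow ?_ (by linarith))
                (ENNReal.ofReal_le_ofReal (min_le_left _ _))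
              have := ENNReal.ofReal_le_ofReal (min_le_right (g x) (n : ℝ))
              rwa [ENNReal.ofReal_natCast] at this
      refine ne_top_of_le_ne_top ?_ this
      have hc : (n : ℝ≥0∞) ^ (p - 1) ≠ ⊤ := ENNReal.rpow_ne_top_of_nonneg (by linarith) (by simp)
      rw [lintegral_const_mul' _ _ hc]
      exact ENNReal.mul_ne_top hc hI
    have h1 := layer_fin hp (hgn n) hfin
    have h2 : ∫⁻ t in Set.Ioi (0 : ℝ), volume {x | t < min (g x) n} ^ (1 / p) ≤ T := by
      refine lintegral_mono fun t => ?_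
      refine ENNReal.rpow_le_rpow (measure_mono fun x hx => ?_) (by positivity)
      have hx' : t < min (g x) n := hx
      exact lt_of_lt_of_le hx' (min_le_left _ _)
    have h3 := ENNReal.rpow_le_rpow (h1.trans h2) hp0.le
    rwa [← ENNReal.rpow_mul, one_div_mul_cancel hp0.ne', ENNReal.rpow_one] at h3
  have hF : ∫⁻ x, ENNReal.ofReal (g x) ^ p ≤ T ^ p := by
    calc ∫⁻ x, ENNReal.ofReal (g x) ^ p
        ≤ ∫⁻ x, Filter.liminf (fun n : ℕ => ENNReal.ofReal (min (g x) n) ^ p) Filter.atTop := by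
          refine lintegral_mono fun x => ?_
          refine Filter.le_liminf_of_le (by isBoundedDefault) ?_
          obtain ⟨k, hk⟩ := exists_nat_ge (g x)
          filter_upwards [Filter.eventually_ge_atTop k] with n hn
          rw [min_eq_left (hk.trans (by exact_mod_cast hn))]
      _ ≤ Filter.liminf (fun n : ℕ => ∫⁻ x, ENNReal.ofReal (min (g x) n) ^ p) Filter.atTop :=
          lintegral_liminf_le fun n => (hgn n).ennreal_ofReal.pow_const _
      _ ≤ T ^ p := by
          refine (Filter.liminf_le_liminf (Filter.Eventually.of_forall hn)).trans ?_
          simp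
  have h3 := ENNReal.rpow_le_rpow hF (show 0 ≤ 1 / p by positivity)
  rwa [← ENNReal.rpow_mul T, mul_one_div_cancel hp0.ne', ENNReal.rpow_one] at h3

lemma gag_pt {N : ℕ} {s : ℝ} (_hs : 0 < s) (u : Rn N → ℝ) (x y : Rn N) :
    ENNReal.ofReal (|u x - u y| / dist x y ^ ((N : ℝ) + s)) =
      ENNReal.ofReal |u x - u y| * fpK N s x y := by
  by_cases h : x = y
  · subst h; simp
  · have hd : 0 < dist x y := dist_pos.2 h
    rw [fpK, edist_dist, ENNReal.ofReal_rpow_of_pos hd, ← ENNReal.ofReal_mul (abs_nonneg _),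
      Real.rpow_neg hd.le]
    rfl

lemma coarea {N : ℕ} {s : ℝ} (hs : 0 < s) {w : Rn N → ℝ} (hw : Measurable w) :
    gagE N s w = ∫⁻ t : ℝ, FP N s {x | t < w x} := by
  classical
  have hpt : ∀ x y, ENNReal.ofReal (|w x - w y| / dist x y ^ ((N : ℝ) + s)) =
      ∫⁻ t : ℝ, fpD N s {x | t < w x} x y := by
    intro x y
    rw [gag_pt hs]
    have e : ∀ t : ℝ, fpD N s {x | t < w x} x y =
        (Set.Ico (min (w x) (w y)) (max (w x) (w y))).indicator 1 t * fpK N s x y := by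
      intro t
      simp only [fpD, Set.mem_ofPred_eq, Set.indicator_apply, Set.mem_Ico, min_le_iff, lt_max_iff]
      by_cases h1 : t < w x <;> by_cases h2 : t < w y <;> simp [h1, h2, not_lt.1, not_le.2]
    simp only [e]
    rw [lintegral_mul_const _ (measurable_one.indicator measurableSet_Ico),
      lintegral_indicator_one measurableSet_Ico, Real.volume_Ico, max_sub_min_eq_abs']
  have hm : Measurable (fun q : (Rn N × Rn N) × ℝ => fpD N s {x | q.2 < w x} q.1.1 q.1.2) := by
    have h1 : MeasurableSet {q : (Rn N × Rn N) × ℝ | q.2 < w q.1.1} :=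
      measurableSet_lt measurable_snd (hw.comp (measurable_fst.comp measurable_fst))
    have h2 : MeasurableSet {q : (Rn N × Rn N) × ℝ | q.2 < w q.1.2} :=
      measurableSet_lt measurable_snd (hw.comp (measurable_snd.comp measurable_fst))
    have h3 : MeasurableSet {q : (Rn N × Rn N) × ℝ | q.2 < w q.1.1 ↔ q.2 < w q.1.2} := by
      have : {q : (Rn N × Rn N) × ℝ | q.2 < w q.1.1 ↔ q.2 < w q.1.2} =
          ({q : (Rn N × Rn N) × ℝ | q.2 < w q.1.1} ∩ {q : (Rn N × Rn N) × ℝ | q.2 < w q.1.2}) ∪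
          ({q : (Rn N × Rn N) × ℝ | q.2 < w q.1.1}ᶜ ∩ {q : (Rn N × Rn N) × ℝ | q.2 < w q.1.2}ᶜ) := by
        ext q
        simp only [Set.mem_ofPred_eq, Set.mem_union, Set.mem_inter_iff, Set.mem_compl_iff]
        tauto
      rw [this]
      exact (h1.inter h2).union (h1.compl.inter h2.compl)
    exact Measurable.ite h3 measurable_const ((fpK_meas N s).comp measurable_fst)
  unfold gagE FP
  simp only [hpt]
  calc _ = ∫⁻ x, ∫⁻ t : ℝ, ∫⁻ y, fpD N s {x | t < w x} x y := by
        refine lintegral_congr fun x => ?_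
        apply lintegral_lintegral_swap
        apply Measurable.aemeasurable
        exact hm.comp (by fun_prop : Measurable (fun z : Rn N × ℝ => ((x, z.1), z.2)))
    _ = _ := by
        apply lintegral_lintegral_swap
        apply Measurable.aemeasurable
        have : Measurable (fun q : (Rn N × ℝ) × Rn N => fpD N s {x | q.1.2 < w x} q.1.1 q.2) :=
          hm.comp (by fun_prop : Measurable (fun z : (Rn N × ℝ) × Rn N => ((z.1.1, z.2), z.1.2)))
        exact this.lintegral_prod_right'

lemma sobolev_meas {N : ℕ} (hN : 1 ≤ N) {s : ℝ} (hs : 0 < s) (hs1 : s < 1) {u : Rn N → ℝ}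
    (hu : Measurable u) (hi : Integrable u) :
    FP N s (Metric.ball 0 1) *
      (∫⁻ x, ENNReal.ofReal |u x| ^ ((N : ℝ) / (N - s))) ^ (((N : ℝ) - s) / N) ≤
      volume (Metric.ball (0 : Rn N) 1) ^ (((N : ℝ) - s) / N) * gagE N s u := by
  have hN' : (1 : ℝ) ≤ N := by exact_mod_cast hN
  have hp : 1 < (N : ℝ) / (N - s) := by rw [one_lt_div (by linarith)]; linarith
  have hp' : ((N : ℝ) - s) / N = 1 / ((N : ℝ) / (N - s)) := by rw [one_div_div]
  have hω : volume (Metric.ball (0 : Rn N) 1) ^ (((N : ℝ) - s) / N) ≠ ⊤ :=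
    ENNReal.rpow_ne_top_of_nonneg (div_nonneg (by linarith) (by linarith)) measure_ball_lt_top.ne
  set w : Rn N → ℝ := fun x => |u x| with hw
  have hwm : Measurable w := hu.abs
  have hwi : Integrable w := hi.abs
  have hle : gagE N s w ≤ gagE N s u := by
    refine lintegral_mono fun x => lintegral_mono fun y => ?_
    refine ENNReal.ofReal_le_ofReal ?_
    exact div_le_div_of_nonneg_right (abs_abs_sub_abs_le (u x) (u y)) (by positivity)
  have hfin : ∫⁻ x, ENNReal.ofReal (w x) ≠ ⊤ := by
    have := hwi.lintegral_lt_top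
    exact this.ne
  have hlay := layer hp hwm hfin
  rw [← hp'] at hlay
  calc _ ≤ FP N s (Metric.ball 0 1) * ∫⁻ t in Set.Ioi (0 : ℝ), volume {x | t < w x} ^ (((N : ℝ) - s) / N) := by
        gcongr 1
    _ ≤ ∫⁻ t in Set.Ioi (0 : ℝ), FP N s (Metric.ball 0 1) * volume {x | t < w x} ^ (((N : ℝ) - s) / N) :=
        lintegral_const_mul_le _ _
    _ ≤ ∫⁻ t in Set.Ioi (0 : ℝ), volume (Metric.ball (0 : Rn N) 1) ^ (((N : ℝ) - s) / N) * FP N s {x | t < w x} := by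
        refine setLIntegral_mono' measurableSet_Ioi fun t ht => ?_
        refine iso_gen hN hs hs1 (measurableSet_lt measurable_const hwm) ?_
        have := hwi.measure_gt_lt_top (ε := t) ht
        exact this.ne
    _ = volume (Metric.ball (0 : Rn N) 1) ^ (((N : ℝ) - s) / N) * ∫⁻ t in Set.Ioi (0 : ℝ), FP N s {x | t < w x} :=
        lintegral_const_mul' _ _ hω
    _ ≤ volume (Metric.ball (0 : Rn N) 1) ^ (((N : ℝ) - s) / N) * gagE N s w := by
        rw [coarea hs hwm]
        gcongr 1
        exact setLIntegral_le_lintegral _ _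
    _ ≤ _ := by gcongr

lemma sobolev {N : ℕ} (hN : 1 ≤ N) {s : ℝ} (hs : 0 < s) (hs1 : s < 1) {u : Rn N → ℝ}
    (hi : Integrable u) :
    FP N s (Metric.ball 0 1) *
      (∫⁻ x, ENNReal.ofReal |u x| ^ ((N : ℝ) / (N - s))) ^ (((N : ℝ) - s) / N) ≤
      volume (Metric.ball (0 : Rn N) 1) ^ (((N : ℝ) - s) / N) * gagE N s u := by
  set v := hi.1.mk u with hv
  have hae : u =ᵐ[volume] v := hi.1.ae_eq_mk
  have hvm : Measurable v := hi.1.stronglyMeasurable_mk.measurable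
  have h := sobolev_meas hN hs hs1 hvm (hi.congr hae)
  have e1 : ∫⁻ x, ENNReal.ofReal |u x| ^ ((N : ℝ) / (N - s)) =
      ∫⁻ x, ENNReal.ofReal |v x| ^ ((N : ℝ) / (N - s)) := by
    apply lintegral_congr_ae
    filter_upwards [hae] with x hx
    rw [hx]
  have e2 : gagE N s u = gagE N s v := by
    apply lintegral_congr_ae
    filter_upwards [hae] with x hx
    apply lintegral_congr_ae
    filter_upwards [hae] with y hy
    rw [hx, hy]
  rw [e1, e2]
  exact h

lemma ball_gag {N : ℕ} {s : ℝ} (hs : 0 < s) (E : Set (Rn N)) :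
    gagE N s (E.indicator 1) = FP N s E := by
  classical
  refine lintegral_congr fun x => lintegral_congr fun y => ?_
  rw [gag_pt hs]
  by_cases h1 : x ∈ E <;> by_cases h2 : y ∈ E <;> simp [fpD, h1, h2]

lemma ball_Lq {N : ℕ} {q : ℝ} (hq : 0 < q) {E : Set (Rn N)} (hE : MeasurableSet E) :
    Lq N q (E.indicator 1) = (volume E).toReal ^ (1 / q) := by
  classical
  unfold Lq
  congr 1
  have : (fun x => |E.indicator (1 : Rn N → ℝ) x| ^ q) = E.indicator 1 := by
    ext x
    by_cases h1 : x ∈ E <;> simp [h1, Real.zero_rpow hq.ne']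
  rw [this, integral_indicator_one hE]
  rfl

lemma omega_eq {N : ℕ} (hN : 1 ≤ N) : (volume (Metric.ball (0 : Rn N) 1)).toReal = omegaN N := by
  have : Nonempty (Fin N) := ⟨⟨0, hN⟩⟩
  rw [EuclideanSpace.volume_ball]
  have hG : 0 < Real.Gamma ((N : ℝ) / 2 + 1) := Real.Gamma_pos_of_pos (by positivity)
  simp only [ENNReal.ofReal_one, one_pow, one_mul, Fintype.card_fin]
  rw [ENNReal.toReal_ofReal (by positivity), omegaN, Real.sqrt_eq_rpow, ← Real.rpow_natCast,
    ← Real.rpow_mul Real.pi_pos.le]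
  congr 2
  ring

lemma Lq_eq {N : ℕ} {p : ℝ} (hp : 0 < p) {u : Rn N → ℝ} (hi : Integrable u) :
    Lq N p u = (∫⁻ x, ENNReal.ofReal |u x| ^ p).toReal ^ (1 / p) := by
  unfold Lq
  congr 1
  rw [integral_eq_lintegral_of_nonneg_ae]
  · congr 1
    refine lintegral_congr fun x => ?_
    rw [ENNReal.ofReal_rpow_of_nonneg (abs_nonneg _) hp.le]
  · exact Filter.Eventually.of_forall fun x => by positivity
  · exact ((hi.1.aemeasurable.abs).pow_const _).aestronglyMeasurable

lemma I_ne_zero {N : ℕ} {p : ℝ} (hp : 0 < p) {u : Rn N → ℝ} (hi : Integrable u)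
    (hn : nontriv N u) : ∫⁻ x, ENNReal.ofReal |u x| ^ p ≠ 0 := by
  intro h
  apply hn
  rw [lintegral_eq_zero_iff' ((hi.1.aemeasurable.abs).ennreal_ofReal.pow_const _)] at h
  filter_upwards [h] with x hx
  simp only [Pi.zero_apply, ENNReal.rpow_eq_zero_iff] at hx
  rcases hx with hx | hx
  · have := ENNReal.ofReal_eq_zero.1 hx.1
    simpa using this
  · simp at hx

/-- upper bound `S_{s,q}(Ω) ≤ 𝒮_{s,1*} (ω_N R_Ω^N)^{1/1*_s - 1/q}`. -/
theorem S_domain_upper_bound (N : ℕ) (hN : 1 ≤ N) (s : ℝ) (hs0 : 0 < s) (hs1 : s < 1)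
    (Ω : Set (Rn N)) (hΩne : Ω.Nonempty) (hΩopen : IsOpen Ω) (hΩbd : Bornology.IsBounded Ω)
    (q : ℝ) (hq1 : 1 ≤ q) (hq : q < (N : ℝ) / ((N : ℝ) - s)) :
    SDom N s q Ω ≤ Scrit N s *
      (omegaN N * inradius N Ω ^ (N : ℝ)) ^ (((N : ℝ) - s) / (N : ℝ) - 1 / q) := by
  have hN' : (1 : ℝ) ≤ N := by exact_mod_cast hN
  set p := (N : ℝ) / ((N : ℝ) - s) with hp_def
  have hp0 : 0 < p := div_pos (by linarith) (by linarith)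
  set θ := ((N : ℝ) - s) / (N : ℝ) with hθ_def
  have hθ0 : 0 < θ := div_pos (by linarith) (by linarith)
  have hpθ : 1 / p = θ := by rw [hp_def, one_div_div]
  have hq0 : 0 < q := by linarith
  set c := FP N s (Metric.ball 0 1) with hc
  set ω := volume (Metric.ball (0 : Rn N) 1) with hω
  have hω0 : ω ≠ 0 := (Metric.measure_ball_pos _ _ one_pos).ne'
  have hωT : ω ≠ ⊤ := measure_ball_lt_top.ne
  have hωr : 0 < omegaN N := by rw [← omega_eq hN]; exact ENNReal.toReal_pos hω0 hωT
  have hsob : ∀ u : Rn N → ℝ, Integrable u →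
      c * (∫⁻ x, ENNReal.ofReal |u x| ^ p) ^ θ ≤ ω ^ θ * gagE N s u :=
    fun u hu => sobolev hN hs0 hs1 hu
  have hωθT : ω ^ θ ≠ ⊤ := ENNReal.rpow_ne_top_of_nonneg hθ0.le hωT
  by_cases hcT : c = ⊤
  · -- no admissible functions at all
    have hno : ∀ u, memW N s u → nontriv N u → False := by
      intro u hu hn
      have h1 := hsob u hu.1
      have h2 : (∫⁻ x, ENNReal.ofReal |u x| ^ p) ^ θ ≠ 0 := by
        intro h
        rw [ENNReal.rpow_eq_zero_iff_of_pos hθ0] at h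
        exact I_ne_zero hp0 hu.1 hn h
      rw [hcT, ENNReal.top_mul h2] at h1
      exact (ENNReal.mul_ne_top hωθT hu.2.ne) (top_le_iff.1 h1)
    have e1 : SDom N s q Ω = 0 := by
      unfold SDom
      convert Real.sInf_empty
      ext r
      simp only [Set.mem_ofPred_eq, Set.mem_empty_iff_false, iff_false]
      rintro ⟨u, h1, _, h2, _⟩
      exact hno u h1 h2
    have e2 : Scrit N s = 0 := by
      unfold Scrit
      convert Real.sInf_empty
      ext r
      simp only [Set.mem_ofPred_eq, Set.mem_empty_iff_false, iff_false]
      rintro ⟨u, h1, h2, _⟩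
      exact hno u h1 h2
    rw [e1, e2, zero_mul]
  -- test functions
  have htest : ∀ (x : Rn N) (R : ℝ), 0 < R →
      memW N s ((Metric.ball x R).indicator 1) ∧ nontriv N ((Metric.ball x R).indicator 1) := by
    intro x R hR
    refine ⟨⟨?_, ?_⟩, ?_⟩
    · exact (integrable_indicator_iff measurableSet_ball).2
        (integrableOn_const measure_ball_lt_top.ne)
    · rw [ball_gag hs0, FP_ball hR]
      exact ENNReal.mul_lt_top (by simp) (lt_top_iff_ne_top.2 hcT)
    · intro h
      have h0 : volume (Metric.ball x R) = 0 := by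
        refine measure_mono_null (fun y hy => ?_) (ae_iff.1 h)
        simpa using hy
      exact (Metric.measure_ball_pos volume x hR).ne' h0
  have hcrit : c.toReal * (omegaN N) ^ (-θ) ≤ Scrit N s := by
    apply le_csInf
    · exact ⟨_, _, (htest 0 1 one_pos).1, (htest 0 1 one_pos).2, rfl⟩
    rintro r ⟨u, hu, hn, rfl⟩
    by_cases hc0 : c = 0
    · rw [hc0]; simp only [ENNReal.toReal_zero, zero_mul]
      apply div_nonneg ENNReal.toReal_nonneg
      exact Real.rpow_nonneg (integral_nonneg fun x => by positivity) _
    have h1 := hsob u hu.1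
    have hI0 := I_ne_zero hp0 hu.1 hn
    rw [← hp_def, Lq_eq hp0 hu.1, hpθ]
    set I := ∫⁻ x, ENNReal.ofReal |u x| ^ p with hI
    have hRT : ω ^ θ * gagE N s u ≠ ⊤ := ENNReal.mul_ne_top hωθT hu.2.ne
    have hIT : I ≠ ⊤ := by
      intro h
      rw [h, ENNReal.top_rpow_of_pos hθ0, ENNReal.mul_top hc0] at h1
      exact hRT (top_le_iff.1 h1)
    have hIr : 0 < I.toReal := ENNReal.toReal_pos hI0 hIT
    have h2 := ENNReal.toReal_mono hRT h1
    rw [ENNReal.toReal_mul, ENNReal.toReal_mul, ← ENNReal.toReal_rpow, ← ENNReal.toReal_rpow,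
      omega_eq hN] at h2
    rw [le_div_iff₀ (Real.rpow_pos_of_pos hIr _), Real.rpow_neg hωr.le]
    have hw : 0 < omegaN N ^ θ := Real.rpow_pos_of_pos hωr _
    unfold gag
    calc c.toReal * (omegaN N ^ θ)⁻¹ * I.toReal ^ θ
        = (omegaN N ^ θ)⁻¹ * (c.toReal * I.toReal ^ θ) := by ring
      _ ≤ (omegaN N ^ θ)⁻¹ * (omegaN N ^ θ * (gagE N s u).toReal) := by gcongr
      _ = _ := by field_simp
  -- the bound for every inner ball
  have hball : ∀ R ∈ {R : ℝ | 0 < R ∧ ∃ x ∈ Ω, Metric.ball x R ⊆ Ω},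
      SDom N s q Ω ≤ Scrit N s * (omegaN N * R ^ (N : ℝ)) ^ (θ - 1 / q) := by
    rintro R ⟨hR, x, hx, hxR⟩
    have hRN : 0 < R ^ (N : ℝ) := Real.rpow_pos_of_pos hR _
    have h1 : SDom N s q Ω ≤ gag N s ((Metric.ball x R).indicator 1) /
        Lq N q ((Metric.ball x R).indicator 1) := by
      apply csInf_le
      · refine ⟨0, ?_⟩
        rintro r ⟨u, _, _, _, rfl⟩
        apply div_nonneg ENNReal.toReal_nonneg
        exact Real.rpow_nonneg (integral_nonneg fun x => by positivity) _
      · refine ⟨_, (htest x R hR).1, ?_, (htest x R hR).2, rfl⟩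
        refine Filter.Eventually.of_forall fun y hy => ?_
        exact Set.indicator_of_notMem (fun h => hy (hxR h)) _
    refine h1.trans ?_
    have hvol : (volume (Metric.ball x R)).toReal = omegaN N * R ^ (N : ℝ) := by
      rw [Measure.addHaar_ball_of_pos _ _ hR, finrank_euclideanSpace_fin, ENNReal.toReal_mul,
        omega_eq hN, ENNReal.toReal_ofReal (by positivity), Real.rpow_natCast, mul_comm]
    have hg : gag N s ((Metric.ball x R).indicator 1) = R ^ ((N : ℝ) - s) * c.toReal := by
      unfold gag
      rw [ball_gag hs0, FP_ball hR, ENNReal.toReal_mul, ENNReal.toReal_ofReal (by positivity)]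
    rw [ball_Lq hq0 measurableSet_ball, hvol, hg]
    have hX : 0 < omegaN N * R ^ (N : ℝ) := by positivity
    have e : R ^ ((N : ℝ) - s) = (omegaN N) ^ (-θ) * (omegaN N * R ^ (N : ℝ)) ^ θ := by
      rw [Real.mul_rpow hωr.le hRN.le, ← mul_assoc, ← Real.rpow_add hωr, neg_add_cancel,
        Real.rpow_zero, one_mul, ← Real.rpow_mul hR.le]
      congr 1
      rw [hθ_def]; field_simp
    rw [e, Real.rpow_sub hX]
    calc _ = (c.toReal * omegaN N ^ (-θ)) * ((omegaN N * R ^ (N : ℝ)) ^ θ /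
          (omegaN N * R ^ (N : ℝ)) ^ (1 / q)) := by ring
      _ ≤ _ := by gcongr
  -- pass to the supremum
  have hne : {R : ℝ | 0 < R ∧ ∃ x ∈ Ω, Metric.ball x R ⊆ Ω}.Nonempty := by
    obtain ⟨x, hx⟩ := hΩne
    obtain ⟨R, hR, h⟩ := Metric.isOpen_iff.1 hΩopen x hx
    exact ⟨R, hR, x, hx, h⟩
  have hbdd : BddAbove {R : ℝ | 0 < R ∧ ∃ x ∈ Ω, Metric.ball x R ⊆ Ω} := by
    have hΩv : volume Ω ≠ ⊤ := hΩbd.measure_lt_top.ne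
    refine ⟨max 1 ((volume Ω).toReal / omegaN N), ?_⟩
    rintro R ⟨hR, x, hx, hxR⟩
    by_cases h1 : R ≤ 1
    · exact h1.trans (le_max_left _ _)
    push Not at h1
    refine le_trans ?_ (le_max_right _ _)
    have h2 := ENNReal.toReal_mono hΩv (measure_mono hxR)
    rw [Measure.addHaar_ball_of_pos _ _ hR, finrank_euclideanSpace_fin, ENNReal.toReal_mul,
        omega_eq hN, ENNReal.toReal_ofReal (by positivity)] at h2
    rw [le_div_iff₀ hωr]
    refine le_trans ?_ h2
    gcongr
    exact le_self_pow₀ h1.le (by omega)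
  obtain ⟨a, -, ha, ham⟩ := exists_seq_tendsto_sSup hne hbdd
  have hpos : 0 < inradius N Ω := by
    obtain ⟨R, hR⟩ := hne
    exact lt_of_lt_of_le hR.1 (le_csSup hbdd hR)
  have hcont : ContinuousAt (fun R : ℝ => Scrit N s * (omegaN N * R ^ (N : ℝ)) ^ (θ - 1 / q))
      (inradius N Ω) := by
    refine ContinuousAt.mul continuousAt_const ?_
    refine ContinuousAt.rpow_const ?_ (Or.inl ?_)
    · exact continuousAt_const.mul (continuousAt_id.rpow_const (Or.inl hpos.ne'))
    · have := Real.rpow_pos_of_pos hpos (N : ℝ)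
      positivity
  have hlim := hcont.tendsto.comp (show Filter.Tendsto a Filter.atTop (nhds (inradius N Ω)) from ha)
  exact ge_of_tendsto' hlim fun n => hball _ (ham n)
end
end

section
/- Let N ≥ 1, 0 < s < 1 and k > 0, and define f : ℝ^N → ℝ by f(x) = (k² − |x|²)^s for |x| ≤ k and f(x) = 0 for |x| > k. Then E_s(f) = ∫_{ℝ^N} |2πξ|^{2s} |f̂(ξ)|² dξ = (2^{2s} ω_N N / (N + 2s)) · Γ(s+1)² · k^{N+2s}. -/
open MeasureTheory Real
open scoped ENNReal FourierTransform

noncomputable section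

/-- The Fourier transform `û(ξ) = ∫ u(x) e^{-2πi x·ξ} dx` of a real-valued function. -/
def FT (N : ℕ) (u : Rn N → ℝ) : Rn N → ℂ :=
  𝓕 (fun x => (u x : ℂ))

/-- The energy `E_s(u) = ∫ |2πξ|^{2s} |û(ξ)|² dξ = ‖(-Δ)^{s/2}u‖²_{L²}`,
as an extended nonnegative real. -/
def esE (N : ℕ) (s : ℝ) (u : Rn N → ℝ) : ℝ≥0∞ :=
  ∫⁻ ξ, ENNReal.ofReal ((2 * π * ‖ξ‖) ^ (2 * s) * ‖FT N u ξ‖ ^ 2)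

section

open Set Filter Topology

/-- Real Beta integral. -/
lemma beta_integral {a b : ℝ} (ha : 0 < a) (hb : 0 < b) :
    ∫ t in Ioo (0:ℝ) 1, t ^ (a - 1) * (1 - t) ^ (b - 1) =
      Gamma a * Gamma b / Gamma (a + b) := by
  have h := ProbabilityTheory.lintegral_betaPDF_eq_one ha hb
  rw [ProbabilityTheory.lintegral_betaPDF] at h
  have hp := ProbabilityTheory.beta_pos ha hb
  have h2 : ∫ t in Ioo (0:ℝ) 1, (1 / ProbabilityTheory.beta a b * t ^ (a - 1) * (1 - t) ^ (b - 1))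
      = 1 := by
    rw [integral_eq_lintegral_of_nonneg_ae, h]
    · simp
    · filter_upwards [ae_restrict_mem measurableSet_Ioo] with t ht
      have h1 : 0 ≤ 1 - t := by linarith [ht.2]
      have h0 := ht.1
      simp only [Pi.zero_apply]
      positivity
    · exact Measurable.aestronglyMeasurable (by fun_prop)
  simp_rw [mul_assoc] at h2
  rw [integral_const_mul] at h2
  change _ = ProbabilityTheory.beta a b
  field_simp at h2
  linarith

lemma beta_integrable {a b : ℝ} (ha : 0 < a) (hb : 0 < b) :
    IntegrableOn (fun t : ℝ => t ^ (a - 1) * (1 - t) ^ (b - 1)) (Ioo (0:ℝ) 1) := by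
  by_contra hc
  have := beta_integral ha hb
  rw [integral_undef hc] at this
  have h2 : 0 < Gamma a * Gamma b / Gamma (a + b) := by positivity
  linarith

lemma gamma_integrable {a r : ℝ} (ha : 0 < a) (hr : 0 < r) :
    IntegrableOn (fun t : ℝ => t ^ (a - 1) * exp (-(r * t))) (Ioi (0:ℝ)) := by
  by_contra hc
  have := integral_rpow_mul_exp_neg_mul_Ioi ha hr
  rw [integral_undef hc] at this
  have h2 : 0 < (1 / r) ^ a * Gamma a := by positivity
  linarith

lemma gamma_le {ν : ℝ} (hν : 0 < ν) (m : ℕ) : Gamma (ν + 1) ≤ Gamma (ν + 1 + m) := by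
  induction m with
  | zero => simp
  | succ m ih =>
    have : Gamma (ν + 1 + (m + 1 : ℕ)) = (ν + 1 + m) * Gamma (ν + 1 + m) := by
      rw [← Gamma_add_one (by positivity)]; push_cast; ring_nf
    rw [this]
    have : 0 < Gamma (ν + 1 + m) := by positivity
    nlinarith [mul_nonneg (show 0 ≤ ν + m by positivity) this.le]

/-- `J_ν`-type entire series. -/
def gterm (ν y : ℝ) (m : ℕ) : ℝ := (-1) ^ m * y ^ m / (m.factorial * Gamma (ν + 1 + m))

def gser (ν y : ℝ) : ℝ := ∑' m, gterm ν y m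

lemma gterm_norm_summable {ν : ℝ} (hν : 0 < ν) (y : ℝ) :
    Summable (fun m => ‖gterm ν y m‖) := by
  have h := (Real.summable_pow_div_factorial |y|).mul_left (Gamma (ν + 1))⁻¹
  refine Summable.of_nonneg_of_le (fun _ => norm_nonneg _) (fun m => ?_) h
  have hg : 0 < Gamma (ν + 1) := by positivity
  have hg2 : 0 < Gamma (ν + 1 + m) := by positivity
  rw [gterm, norm_div, norm_mul, norm_pow, norm_pow, norm_mul]
  simp only [norm_neg, norm_one, one_pow, one_mul, Real.norm_eq_abs, Nat.abs_cast,
    abs_of_pos hg2]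
  rw [inv_mul_eq_div, div_div]
  gcongr
  exact gamma_le hν m

lemma vandermonde (L : ℕ) : ∀ a b : ℝ, 1 ≤ a → 1 ≤ b →
    ∑ p ∈ Finset.HasAntidiagonal.antidiagonal L, (L.choose p.1 : ℝ) / (Gamma (a + p.1) * Gamma (b + p.2)) =
      Gamma (a + b + 2 * L - 1) / (Gamma (a + L) * Gamma (b + L) * Gamma (a + b + L - 1)) := by
  induction L with
  | zero =>
    intro a b ha hb
    have : 0 < Gamma (a + b - 1) := Gamma_pos_of_pos (by linarith)
    simp
    field_simp
  | succ L ih =>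
    intro a b ha hb
    have e := Finset.sum_antidiagonal_choose_succ_mul
      (fun i j => 1 / (Gamma (a + (i:ℕ)) * Gamma (b + (j:ℕ)))) L
    have e1 : ∑ p ∈ Finset.HasAntidiagonal.antidiagonal (L+1),
        ((L+1).choose p.1 : ℝ) / (Gamma (a + p.1) * Gamma (b + p.2)) =
        ∑ p ∈ Finset.HasAntidiagonal.antidiagonal L, (L.choose p.1 : ℝ) / (Gamma (a + p.1) * Gamma (b + 1 + p.2))
        + ∑ p ∈ Finset.HasAntidiagonal.antidiagonal L, (L.choose p.1 : ℝ) / (Gamma (a + 1 + p.1) * Gamma (b + p.2)) := by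
      simp only [mul_one_div] at e
      rw [e]
      congr 1
      · refine Finset.sum_congr rfl fun p _ => ?_
        congr 3; push_cast; ring
      · refine Finset.sum_congr rfl fun p hp => ?_
        have := Finset.HasAntidiagonal.mem_antidiagonal.1 hp
        rw [show L.choose p.2 = L.choose p.1 from
          (Nat.choose_symm_of_eq_add (by omega))]
        congr 3; push_cast; ring_nf
    rw [e1, ih a (b+1) ha (by linarith), ih (a+1) b (by linarith) hb]
    have hL : (0:ℝ) ≤ L := by positivity
    have g1 : Gamma (a + (L + 1 : ℕ)) = (a + L) * Gamma (a + L) := by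
      rw [← Gamma_add_one (by positivity)]; push_cast; ring_nf
    have g2 : Gamma (b + (L + 1 : ℕ)) = (b + L) * Gamma (b + L) := by
      rw [← Gamma_add_one (by positivity)]; push_cast; ring_nf
    have g3 : Gamma (a + b + 2 * (L + 1 : ℕ) - 1) =
        (a + b + 2 * L) * Gamma (a + b + 2 * L) := by
      rw [← Gamma_add_one (by positivity)]; push_cast; ring_nf
    rw [g1, g2, g3]
    rw [show a + (b + 1) + 2 * (L:ℝ) - 1 = a + b + 2 * L by ring,
      show a + 1 + b + 2 * (L:ℝ) - 1 = a + b + 2 * L by ring,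
      show b + 1 + (L:ℝ) = (b + L) + 1 by ring, show a + 1 + (L:ℝ) = (a + L) + 1 by ring,
      Gamma_add_one (by positivity), Gamma_add_one (by positivity),
      show a + (b + 1) + (L:ℝ) - 1 = a + b + L by ring,
      show a + 1 + b + (L:ℝ) - 1 = a + b + L by ring,
      show a + b + ((L + 1 : ℕ):ℝ) - 1 = a + b + L by push_cast; ring]
    have q1 : 0 < Gamma (a + L) := by positivity
    have q2 : 0 < Gamma (b + L) := by positivity
    have q3 : 0 < Gamma (a + b + L) := by positivity
    field_simp
    ring

def cc (ν : ℝ) (L : ℕ) : ℝ :=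
  Gamma (2 * ν + 2 * L + 1) / (L.factorial * Gamma (ν + L + 1) ^ 2 * Gamma (2 * ν + L + 1))

lemma gser_sq {ν : ℝ} (hν : 0 < ν) (y : ℝ) :
    HasSum (fun L : ℕ => (-1) ^ L * y ^ L * cc ν L) (gser ν y ^ 2) := by
  have hs := gterm_norm_summable hν y
  have e : ∀ L : ℕ, ∑ p ∈ Finset.HasAntidiagonal.antidiagonal L, gterm ν y p.1 * gterm ν y p.2 =
      (-1) ^ L * y ^ L * cc ν L := by
    intro L
    have v := vandermonde L (ν + 1) (ν + 1) (by linarith) (by linarith)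
    have : cc ν L = (1 / L.factorial) * ∑ p ∈ Finset.HasAntidiagonal.antidiagonal L,
      (L.choose p.1 : ℝ) / (Gamma (ν + 1 + p.1) * Gamma (ν + 1 + p.2)) := by
      rw [v, cc, show ν + 1 + (ν + 1) + 2 * (L:ℝ) - 1 = 2 * ν + 2 * L + 1 by ring,
        show ν + 1 + (ν + 1) + (L:ℝ) - 1 = 2 * ν + L + 1 by ring,
        show ν + 1 + (L:ℝ) = ν + L + 1 by ring]
      have q1 : 0 < Gamma (ν + L + 1) := by positivity
      have q2 : 0 < Gamma (2 * ν + L + 1) := by positivity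
      field_simp
    rw [this, Finset.mul_sum, Finset.mul_sum]
    refine Finset.sum_congr rfl fun p hp => ?_
    have hp := Finset.HasAntidiagonal.mem_antidiagonal.1 hp
    have hc : (L.choose p.1 : ℝ) = L.factorial / (p.1.factorial * p.2.factorial) := by
      rw [Nat.cast_choose ℝ (by omega), show L - p.1 = p.2 by omega]
    rw [hc, ← hp, pow_add, pow_add, gterm, gterm]
    have q1 : 0 < Gamma (ν + 1 + p.1) := by positivity
    have q2 : 0 < Gamma (ν + 1 + p.2) := by positivity
    field_simp
  have h1 := summable_norm_sum_mul_antidiagonal_of_summable_norm hs hs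
  have h2 := tsum_mul_tsum_eq_tsum_sum_antidiagonal_of_summable_norm hs hs
  simp only [e] at h1 h2
  rw [gser, sq, h2]
  exact h1.of_norm.hasSum

def bb (ν : ℝ) (L : ℕ) : ℝ := Gamma (ν + L + 1 / 2) * Gamma (ν + 1 / 2) / Gamma (2 * ν + L + 1)

def CC (ν : ℝ) : ℝ := 4 ^ ν / (√π * Gamma (ν + 1 / 2))

lemma cc_eq {ν : ℝ} (hν : 0 < ν) (L : ℕ) :
    cc ν L * Gamma (ν + L) = CC ν * (4 ^ L / (L.factorial * (ν + L)) * bb ν L) := by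
  have d := Gamma_mul_Gamma_add_half (ν + L + 1 / 2)
  rw [show ν + L + 1 / 2 + 1 / 2 = ν + (L:ℝ) + 1 by ring,
    show 2 * (ν + (L:ℝ) + 1 / 2) = 2 * ν + 2 * L + 1 by ring] at d
  have e : (2:ℝ) ^ (1 - (2 * ν + 2 * L + 1)) = (4 ^ ν * 4 ^ L)⁻¹ := by
    rw [show 1 - (2 * ν + 2 * (L:ℝ) + 1) = -(2 * (ν + L)) by ring, rpow_neg (by norm_num),
      rpow_mul (by norm_num), ← rpow_natCast 4 L, ← rpow_add (by norm_num)]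
    norm_num
  rw [e] at d
  have g : Gamma (ν + L + 1) = (ν + L) * Gamma (ν + L) := Gamma_add_one (by positivity)
  have q1 : 0 < Gamma (ν + L) := by positivity
  have q2 : 0 < Gamma (2 * ν + L + 1) := by positivity
  have q3 : 0 < Gamma (ν + 1 / 2) := by positivity
  have hpi : 0 < √π := by positivity
  have h4 : (0:ℝ) < 4 ^ ν := by positivity
  rw [g] at d
  rw [cc, bb, CC, g]
  field_simp at d ⊢
  linear_combination (-1) * d

lemma bb_pos {ν : ℝ} (hν : 0 < ν) (L : ℕ) : 0 < bb ν L := by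
  rw [bb]; positivity

lemma CC_pos {ν : ℝ} (hν : 0 < ν) : 0 < CC ν := by
  rw [CC]; positivity

lemma bb_int {ν : ℝ} (hν : 0 < ν) (L : ℕ) :
    ∫ t in Ioo (0:ℝ) 1, t ^ (ν - 1 / 2) * (1 - t) ^ (ν - 1 / 2) * t ^ L = bb ν L := by
  have := beta_integral (a := ν + L + 1 / 2) (b := ν + 1 / 2) (by positivity) (by positivity)
  rw [show ν + L + 1 / 2 + (ν + 1 / 2) = 2 * ν + (L:ℝ) + 1 by ring] at this
  rw [bb, ← this]
  refine setIntegral_congr_fun measurableSet_Ioo fun t ht => ?_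
  rw [show ν + (L:ℝ) + 1 / 2 - 1 = (ν - 1 / 2) + L by ring, rpow_add ht.1, rpow_natCast,
    show ν + 1 / 2 - 1 = ν - 1 / 2 by ring]
  ring

lemma bb_integrable {ν : ℝ} (hν : 0 < ν) (L : ℕ) :
    IntegrableOn (fun t : ℝ => t ^ (ν - 1 / 2) * (1 - t) ^ (ν - 1 / 2) * t ^ L) (Ioo (0:ℝ) 1) := by
  by_contra hc
  have := bb_int hν L
  rw [integral_undef hc] at this
  linarith [bb_pos hν L]

lemma bb_le {ν : ℝ} (hν : 0 < ν) (L : ℕ) : bb ν L ≤ bb ν 0 := by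
  rw [← bb_int hν L, ← bb_int hν 0]
  refine setIntegral_mono_on (bb_integrable hν L) (bb_integrable hν 0) measurableSet_Ioo ?_
  intro t ht
  have h0 := ht.1
  have h1 : 0 < 1 - t := by linarith [ht.2]
  gcongr 1
  simpa using pow_le_one₀ ht.1.le ht.2.le

lemma sum_base {ν x : ℝ} (hν : 0 < ν) (hx : 0 < x) :
    Summable (fun L : ℕ => 4 ^ L / (L.factorial * (ν + L)) * bb ν L * x ^ (ν + L)) := by
  have h := (Real.summable_pow_div_factorial (4 * x)).mul_left (x ^ ν * bb ν 0 / ν)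
  refine Summable.of_nonneg_of_le (fun L => ?_) (fun L => ?_) h
  · have := bb_pos hν L
    positivity
  · rw [rpow_add hx, rpow_natCast]
    have h1 := bb_le hν L
    have h0 := bb_pos hν L
    have : x ^ ν * bb ν 0 / ν * ((4 * x) ^ L / L.factorial) =
        4 ^ L / (L.factorial * ν) * bb ν 0 * (x ^ ν * x ^ L) := by
      rw [mul_pow]; field_simp
    rw [this]
    gcongr
    simp

def SS (ν x : ℝ) : ℝ := ∑' L : ℕ, CC ν * ((-1) ^ L *
  (4 ^ L / (L.factorial * (ν + L)) * bb ν L * x ^ (ν + L)))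

/-- regularised integral -/
lemma reg_int {ν x : ℝ} (hν : 0 < ν) (hx : 0 < x) :
    ∫ y in Ioi (0:ℝ), y ^ (ν - 1) * exp (-(1 / x * y)) * gser ν y ^ 2 = SS ν x := by
  set F : ℕ → ℝ → ℝ := fun L y =>
    ((-1) ^ L * cc ν L) * (y ^ (ν + L - 1) * exp (-(1 / x * y))) with hF
  have hx' : 0 < 1 / x := by positivity
  have hp : ∀ L : ℕ, 0 < ν + L := fun L => by positivity
  have hccp : ∀ L, 0 < cc ν L := fun L => by rw [cc]; positivity
  have i1 : ∀ L, Integrable (F L) (volume.restrict (Ioi 0)) := fun L =>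
    (gamma_integrable (hp L) hx').const_mul _
  have v1 : ∀ L : ℕ, cc ν L * ∫ y in Ioi (0:ℝ), y ^ (ν + L - 1) * exp (-(1 / x * y)) =
      CC ν * (4 ^ L / (L.factorial * (ν + L)) * bb ν L * x ^ (ν + L)) := fun L => by
    rw [integral_rpow_mul_exp_neg_mul_Ioi (hp L) hx', one_div_one_div]
    linear_combination x ^ (ν + L) * cc_eq hν L
  have v2 : ∀ L, ∫ y in Ioi (0:ℝ), ‖F L y‖ =
      CC ν * (4 ^ L / (L.factorial * (ν + L)) * bb ν L * x ^ (ν + L)) := fun L => by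
    rw [← v1, ← integral_const_mul]
    refine setIntegral_congr_fun measurableSet_Ioi fun y hy => ?_
    have hy : 0 < y := hy
    simp only [hF, norm_mul, norm_pow, norm_neg, norm_one, one_pow, one_mul]
    rw [Real.norm_of_nonneg (hccp L).le, Real.norm_of_nonneg (by positivity),
      Real.norm_of_nonneg (by positivity)]
  have h := hasSum_integral_of_summable_integral_norm i1
    (by simp only [v2]; exact (sum_base hν hx).mul_left _)
  rw [SS]
  have h' := h.tsum_eq
  have e1 : ∀ L, ∫ y in Ioi (0:ℝ), F L y = CC ν * ((-1) ^ L *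
      (4 ^ L / (L.factorial * (ν + L)) * bb ν L * x ^ (ν + L))) := fun L => by
    simp only [hF]
    rw [integral_const_mul]
    linear_combination (-1) ^ L * v1 L
  simp only [e1] at h'
  rw [h']
  refine setIntegral_congr_fun measurableSet_Ioi fun y hy => ?_
  have hy : 0 < y := hy
  simp only [hF]
  have g := (gser_sq hν y).mul_left (y ^ (ν - 1) * exp (-(1 / x * y)))
  rw [← g.tsum_eq]
  refine tsum_congr fun L => ?_
  rw [show ν + (L:ℝ) - 1 = (ν - 1) + L by ring, rpow_add hy, rpow_natCast]
  ring

def hh (ν x t : ℝ) : ℝ := ∫ z in Ioo (0:ℝ) x, z ^ (ν - 1) * exp (-(4 * t * z))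

lemma pow_int {ν x : ℝ} (hν : 0 < ν) (hx : 0 < x) :
    ∫ z in Ioo (0:ℝ) x, z ^ (ν - 1) = x ^ ν / ν := by
  rw [← integral_Ioc_eq_integral_Ioo, ← intervalIntegral.integral_of_le hx.le,
    integral_rpow (Or.inl (by linarith))]
  simp [zero_rpow hν.ne']

lemma pow_integrable {ν x : ℝ} (hν : 0 < ν) (hx : 0 < x) :
    IntegrableOn (fun z : ℝ => z ^ (ν - 1)) (Ioo (0:ℝ) x) := by
  by_contra hc
  have := pow_int hν hx
  rw [integral_undef hc] at this
  have : 0 < x ^ ν / ν := by positivity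
  linarith

lemma hh_eq {ν x t : ℝ} (hν : 0 < ν) (hx : 0 < x) (ht : 0 < t) :
    hh ν x t = ∑' L : ℕ, (-1) ^ L * (4 ^ L / (L.factorial * (ν + L)) * t ^ L * x ^ (ν + L)) := by
  set F : ℕ → ℝ → ℝ := fun L z =>
    ((-1) ^ L * (4 * t) ^ L / L.factorial) * z ^ (ν + L - 1) with hF
  have hp : ∀ L : ℕ, 0 < ν + L := fun L => by positivity
  have i1 : ∀ L, Integrable (F L) (volume.restrict (Ioo 0 x)) := fun L =>
    (pow_integrable (hp L) hx).const_mul _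
  have v2 : ∀ L, ∫ z in Ioo (0:ℝ) x, ‖F L z‖ =
      4 ^ L / (L.factorial * (ν + L)) * t ^ L * x ^ (ν + L) := fun L => by
    have : 4 ^ L / (L.factorial * (ν + L)) * t ^ L * x ^ (ν + L) =
      (4 * t) ^ L / L.factorial * (x ^ (ν + L) / (ν + L)) := by
        rw [mul_pow]; field_simp
    rw [this, ← pow_int (hp L) hx, ← integral_const_mul]
    refine setIntegral_congr_fun measurableSet_Ioo fun y hy => ?_
    have hy : 0 < y := hy.1
    simp only [hF, norm_mul, norm_pow, norm_neg, norm_one, one_pow, one_mul, norm_div]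
    rw [Real.norm_of_nonneg (by positivity), Real.norm_of_nonneg (by positivity),
      Real.norm_of_nonneg (by positivity), Real.norm_of_nonneg (by positivity), mul_pow]
  have e1 : ∀ L, ∫ z in Ioo (0:ℝ) x, F L z = (-1) ^ L *
      (4 ^ L / (L.factorial * (ν + L)) * t ^ L * x ^ (ν + L)) := fun L => by
    simp only [hF]
    rw [integral_const_mul, pow_int (hp L) hx, mul_pow]
    field_simp
  have hs : Summable fun L : ℕ => 4 ^ L / (L.factorial * (ν + L)) * t ^ L * x ^ (ν + L) := by
    have h := (Real.summable_pow_div_factorial (4 * t * x)).mul_left (x ^ ν / ν)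
    refine Summable.of_nonneg_of_le (fun L => by positivity) (fun L => ?_) h
    rw [rpow_add hx, rpow_natCast]
    have : x ^ ν / ν * ((4 * t * x) ^ L / L.factorial) =
        4 ^ L / (L.factorial * ν) * t ^ L * (x ^ ν * x ^ L) := by
      rw [mul_pow, mul_pow]; field_simp
    rw [this]
    gcongr
    simp
  have h := hasSum_integral_of_summable_integral_norm i1 (by simpa only [v2] using hs)
  simp only [e1] at h
  rw [h.tsum_eq, hh]
  refine setIntegral_congr_fun measurableSet_Ioo fun z hz => ?_
  have hz : 0 < z := hz.1
  simp only [hF]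
  rw [Real.exp_eq_exp_ℝ, NormedSpace.exp_eq_tsum_div, ← tsum_mul_left]
  refine tsum_congr fun L => ?_
  rw [show ν + (L:ℝ) - 1 = (ν - 1) + L by ring, rpow_add hz, rpow_natCast,
    show -(4 * t * z) = (-1) * (4 * t) * z by ring, mul_pow, mul_pow]
  ring

lemma SS_eq {ν x : ℝ} (hν : 0 < ν) (hx : 0 < x) :
    SS ν x = CC ν * ∫ t in Ioo (0:ℝ) 1, t ^ (ν - 1 / 2) * (1 - t) ^ (ν - 1 / 2) * hh ν x t := by
  set F : ℕ → ℝ → ℝ := fun L t =>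
    ((-1) ^ L * (4 ^ L / (L.factorial * (ν + L)) * x ^ (ν + L))) *
      (t ^ (ν - 1 / 2) * (1 - t) ^ (ν - 1 / 2) * t ^ L) with hF
  have i1 : ∀ L, Integrable (F L) (volume.restrict (Ioo 0 1)) := fun L =>
    (bb_integrable hν L).const_mul _
  have v2 : ∀ L, ∫ t in Ioo (0:ℝ) 1, ‖F L t‖ =
      4 ^ L / (L.factorial * (ν + L)) * bb ν L * x ^ (ν + L) := fun L => by
    rw [mul_right_comm, ← bb_int hν L, ← integral_const_mul]
    refine setIntegral_congr_fun measurableSet_Ioo fun y hy => ?_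
    have hy0 : 0 < y := hy.1
    have hy1 : 0 < 1 - y := by linarith [hy.2]
    simp only [hF]
    rw [norm_mul, norm_mul, norm_pow, norm_neg, norm_one, one_pow, one_mul,
      Real.norm_of_nonneg (by positivity), Real.norm_of_nonneg (by positivity)]
  have e1 : ∀ L, ∫ t in Ioo (0:ℝ) 1, F L t = (-1) ^ L *
      (4 ^ L / (L.factorial * (ν + L)) * bb ν L * x ^ (ν + L)) := fun L => by
    simp only [hF]
    rw [integral_const_mul, bb_int hν L]
    ring
  have h := hasSum_integral_of_summable_integral_norm i1
    (by simpa only [v2] using sum_base hν hx)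
  simp only [e1] at h
  rw [SS, tsum_mul_left, h.tsum_eq]
  congr 1
  refine setIntegral_congr_fun measurableSet_Ioo fun t ht => ?_
  simp only [hF]
  rw [hh_eq hν hx ht.1, ← tsum_mul_left]
  refine tsum_congr fun L => ?_
  ring

lemma hh_nonneg {ν x t : ℝ} : 0 ≤ hh ν x t := by
  refine setIntegral_nonneg measurableSet_Ioo fun z hz => ?_
  have := hz.1
  positivity

lemma hh_le {ν x t : ℝ} (hν : 0 < ν) (ht : 0 < t) :
    hh ν x t ≤ (1 / (4 * t)) ^ ν * Gamma ν := by
  have h4 : 0 < 4 * t := by positivity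
  rw [← integral_rpow_mul_exp_neg_mul_Ioi hν h4]
  refine setIntegral_mono_set (gamma_integrable hν h4) ?_ (Ioo_subset_Ioi_self).eventuallyLE
  filter_upwards [ae_restrict_mem measurableSet_Ioi] with z hz
  have : 0 < z := hz
  simp only [Pi.zero_apply]
  positivity

lemma hh_tendsto {ν t : ℝ} (hν : 0 < ν) (ht : 0 < t) :
    Tendsto (fun n : ℕ => hh ν ((n:ℝ) + 1) t) atTop (𝓝 ((1 / (4 * t)) ^ ν * Gamma ν)) := by
  have h4 : 0 < 4 * t := by positivity
  rw [← integral_rpow_mul_exp_neg_mul_Ioi hν h4]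
  have := intervalIntegral_tendsto_integral_Ioi 0 (gamma_integrable hν h4)
    (tendsto_atTop_add_const_right _ (1:ℝ) tendsto_natCast_atTop_atTop)
  refine this.congr fun n => ?_
  rw [hh, intervalIntegral.integral_of_le (by positivity), integral_Ioc_eq_integral_Ioo]

lemma SS_tendsto {ν : ℝ} (hν : 0 < ν) :
    Tendsto (fun n : ℕ => SS ν ((n:ℝ) + 1)) atTop (𝓝 (1 / ν)) := by
  have hb := beta_integral (a := 1 / 2) (b := ν + 1 / 2) (by norm_num) (by positivity)
  have hbi := beta_integrable (a := 1 / 2) (b := ν + 1 / 2) (by norm_num) (by positivity)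
  have key : ∀ t ∈ Ioo (0:ℝ) 1, t ^ (ν - 1 / 2) * (1 - t) ^ (ν - 1 / 2) *
      ((1 / (4 * t)) ^ ν * Gamma ν) =
      Gamma ν / 4 ^ ν * (t ^ ((1:ℝ) / 2 - 1) * (1 - t) ^ (ν + 1 / 2 - 1)) := by
    intro t ht
    rw [show (1:ℝ) / 2 - 1 = (ν - 1 / 2) + (-ν) by ring, rpow_add ht.1, rpow_neg ht.1.le,
      one_div (4 * t), inv_rpow (by linarith [ht.1]), mul_rpow (by norm_num) ht.1.le,
      show ν + 1 / 2 - 1 = ν - 1 / 2 by ring]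
    have : 0 < t ^ ν := rpow_pos_of_pos ht.1 _
    field_simp
  have hval : 1 / ν = CC ν * ∫ t in Ioo (0:ℝ) 1, t ^ (ν - 1 / 2) * (1 - t) ^ (ν - 1 / 2) *
      ((1 / (4 * t)) ^ ν * Gamma ν) := by
    rw [setIntegral_congr_fun measurableSet_Ioo key, integral_const_mul, hb,
      show 1 / 2 + (ν + 1 / 2) = ν + 1 by ring, Gamma_add_one hν.ne', Gamma_one_half_eq, CC]
    have q1 : 0 < Gamma ν := by positivity
    have q3 : 0 < Gamma (ν + 1 / 2) := by positivity
    field_simp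
  rw [hval]
  have e : ∀ n : ℕ, SS ν ((n:ℝ) + 1) = CC ν * ∫ t in Ioo (0:ℝ) 1,
      t ^ (ν - 1 / 2) * (1 - t) ^ (ν - 1 / 2) * hh ν ((n:ℝ) + 1) t :=
    fun n => SS_eq hν (by positivity)
  simp only [e]
  refine Tendsto.const_mul _ ?_
  refine tendsto_integral_of_dominated_convergence (fun t => Gamma ν / 4 ^ ν *
    (t ^ ((1:ℝ) / 2 - 1) * (1 - t) ^ (ν + 1 / 2 - 1))) ?_ (hbi.const_mul _) ?_ ?_
  · intro n
    refine AEStronglyMeasurable.mul (Measurable.aestronglyMeasurable (by fun_prop)) ?_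
    have : StronglyMeasurable fun t => hh ν ((n:ℝ) + 1) t := by
      unfold hh
      apply StronglyMeasurable.integral_prod_right (f := fun (t z : ℝ) => z ^ (ν - 1) * exp (-(4 * t * z)))
      exact Measurable.stronglyMeasurable (by fun_prop)
    exact this.aestronglyMeasurable
  · intro n
    filter_upwards [ae_restrict_mem measurableSet_Ioo] with t ht
    have h0 := ht.1
    have h1 : 0 < 1 - t := by linarith [ht.2]
    have := hh_nonneg (ν := ν) (x := (n:ℝ) + 1) (t := t)
    rw [← key t ht, Real.norm_of_nonneg (by positivity)]
    gcongr
    exact hh_le hν h0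
  · filter_upwards [ae_restrict_mem measurableSet_Ioo] with t ht
    exact (hh_tendsto hν ht.1).const_mul _

lemma gser_measurable {ν : ℝ} (hν : 0 < ν) : Measurable (gser ν) := by
  refine measurable_of_tendsto_metrizable (f := fun n y => ∑ m ∈ Finset.range n, gterm ν y m) ?_ ?_
  · intro n
    unfold gterm
    fun_prop
  · rw [tendsto_pi_nhds]
    intro y
    exact (gterm_norm_summable hν y).of_norm.hasSum.tendsto_sum_nat

lemma main_lint {ν : ℝ} (hν : 0 < ν) :
    ∫⁻ y in Ioi (0:ℝ), ENNReal.ofReal (y ^ (ν - 1) * gser ν y ^ 2) = ENNReal.ofReal (1 / ν) := by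
  have hm := gser_measurable hν
  have t1 : Tendsto (fun n : ℕ => ∫⁻ y in Ioi (0:ℝ), ENNReal.ofReal
      (y ^ (ν - 1) * exp (-(1 / ((n:ℝ) + 1) * y)) * gser ν y ^ 2)) atTop
      (𝓝 (∫⁻ y in Ioi (0:ℝ), ENNReal.ofReal (y ^ (ν - 1) * gser ν y ^ 2))) := by
    refine lintegral_tendsto_of_tendsto_of_monotone ?_ ?_ ?_
    · intro n
      exact Measurable.aemeasurable (by fun_prop)
    · filter_upwards [ae_restrict_mem measurableSet_Ioi] with y hy
      have hy : 0 < y := hy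
      intro n m hnm
      simp only
      gcongr
    · filter_upwards [ae_restrict_mem measurableSet_Ioi] with y hy
      refine ENNReal.tendsto_ofReal ?_
      have h1 : Tendsto (fun n : ℕ => exp (-(1 / ((n:ℝ) + 1) * y))) atTop (𝓝 1) := by
        have := (tendsto_one_div_add_atTop_nhds_zero_nat (𝕜 := ℝ)).mul_const y
        have := (continuous_exp.tendsto _).comp this.neg
        simpa [Function.comp_def] using this
      simpa using (h1.const_mul (y ^ (ν - 1))).mul_const (gser ν y ^ 2)
  have t2 := ENNReal.tendsto_ofReal (SS_tendsto hν)
  refine tendsto_nhds_unique t1 (t2.congr' ?_)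
  filter_upwards [(SS_tendsto hν).eventually (lt_mem_nhds (show 0 < 1 / ν by positivity))] with n hn
  have hx : (0:ℝ) < n + 1 := by positivity
  rw [← reg_int hν hx] at hn ⊢
  rw [ofReal_integral_eq_lintegral_ofReal]
  · by_contra hc
    rw [integral_undef hc] at hn
    exact lt_irrefl _ hn
  · filter_upwards [ae_restrict_mem measurableSet_Ioi] with y hy
    have hy : 0 < y := hy
    simp only [Pi.zero_apply]
    positivity

lemma main_integral {ν : ℝ} (hν : 0 < ν) :
    ∫ y in Ioi (0:ℝ), y ^ (ν - 1) * gser ν y ^ 2 = 1 / ν := by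
  have hm := gser_measurable hν
  rw [integral_eq_lintegral_of_nonneg_ae, main_lint hν, ENNReal.toReal_ofReal (by positivity)]
  · filter_upwards [ae_restrict_mem measurableSet_Ioi] with y hy
    have hy : 0 < y := hy
    simp only [Pi.zero_apply]
    positivity
  · exact Measurable.aestronglyMeasurable (by fun_prop)

/-- radial version after `y = (b r)²`. -/
lemma main_integral2 {ν b : ℝ} (hν : 0 < ν) (hb : 0 < b) :
    ∫ r in Ioi (0:ℝ), r ^ (2 * ν - 1) * gser ν ((b * r) ^ 2) ^ 2 = b ^ (-(2 * ν)) / (2 * ν) := by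
  have h1 := integral_comp_rpow_Ioi_of_pos (g := fun y : ℝ => y ^ (ν - 1) * gser ν y ^ 2)
    (p := 2) (by norm_num)
  rw [main_integral hν] at h1
  have h2 : ∫ u in Ioi (0:ℝ), u ^ (2 * ν - 1) * gser ν (u ^ 2) ^ 2 = 1 / (2 * ν) := by
    have : ∫ u in Ioi (0:ℝ), 2 * (u ^ (2 * ν - 1) * gser ν (u ^ 2) ^ 2) = 1 / ν := by
      rw [← h1]
      refine setIntegral_congr_fun measurableSet_Ioi fun u hu => ?_
      have hu : 0 < u := hu
      simp only [smul_eq_mul]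
      rw [← rpow_mul hu.le, show (2:ℝ) * ν - 1 = (2 - 1) + 2 * (ν - 1) by ring, rpow_add hu,
        rpow_two]
      ring
    rw [integral_const_mul] at this
    rw [eq_div_iff (by positivity)] at this ⊢
    linarith
  have h3 := integral_comp_mul_left_Ioi
    (fun u : ℝ => u ^ (2 * ν - 1) * gser ν (u ^ 2) ^ 2) 0 hb
  rw [mul_zero, h2, smul_eq_mul] at h3
  have h4 : ∫ r in Ioi (0:ℝ), b ^ (2 * ν - 1) * (r ^ (2 * ν - 1) * gser ν ((b * r) ^ 2) ^ 2)
      = b⁻¹ * (1 / (2 * ν)) := by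
    rw [← h3]
    refine setIntegral_congr_fun measurableSet_Ioi fun u hu => ?_
    have hu : 0 < u := hu
    rw [mul_rpow hb.le hu.le]
    ring
  rw [integral_const_mul, rpow_sub_one hb.ne'] at h4
  rw [rpow_neg hb.le]
  have : 0 < b ^ (2 * ν) := by positivity
  field_simp at h4 ⊢
  linarith

lemma polar_moment (N : ℕ) (hN : 1 ≤ N) (m : ℕ) (ξ : Rn N) (φ : ℝ → ℝ) :
    ∫ x : Rn N, (inner ℝ x ξ) ^ (2 * m) * φ ‖x‖ =
      (∫ θ : Metric.sphere (0 : Rn N) 1, (inner ℝ (θ : Rn N) ξ) ^ (2 * m)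
        ∂(volume : Measure (Rn N)).toSphere) *
      ∫ r in Ioi (0:ℝ), r ^ (2 * m + N - 1) * φ r := by
  have : Nonempty (Fin N) := ⟨⟨0, hN⟩⟩
  set μ : Measure (Rn N) := volume with hμ
  have hd : Module.finrank ℝ (Rn N) = N := by simp
  calc
    _ = ∫ x : ({(0)}ᶜ : Set (Rn N)), (inner ℝ x.1 ξ) ^ (2 * m) * φ ‖x.1‖ ∂(μ.comap (↑)) := by
      rw [integral_subtype_comap (measurableSet_singleton _).compl
        fun x : Rn N ↦ (inner ℝ x ξ) ^ (2 * m) * φ ‖x‖, restrict_compl_singleton]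
    _ = ∫ p, (inner ℝ (p.1 : Rn N) ξ) ^ (2 * m) * ((p.2 : ℝ) ^ (2 * m) * φ p.2)
        ∂μ.toSphere.prod (.volumeIoiPow (Module.finrank ℝ (Rn N) - 1)) := by
      rw [← μ.measurePreserving_homeomorphUnitSphereProd.integral_comp
        (Homeomorph.measurableEmbedding _)]
      refine integral_congr_ae (.of_forall fun x => ?_)
      have hx : ‖x.1‖ ≠ 0 := norm_ne_zero_iff.2 x.2
      simp only [homeomorphUnitSphereProd_apply_snd_coe, homeomorphUnitSphereProd_apply_fst_coe,
        inner_smul_left, mul_pow]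
      simp only [map_inv₀, conj_trivial, inv_pow]
      have hx2 : ‖x.1‖ ^ (2 * m) ≠ 0 := pow_ne_zero _ hx
      field_simp
    _ = (∫ θ, (inner ℝ (θ : Rn N) ξ) ^ (2 * m) ∂μ.toSphere) *
        ∫ r : Ioi (0:ℝ), ((r : ℝ) ^ (2 * m) * φ r)
          ∂.volumeIoiPow (Module.finrank ℝ (Rn N) - 1) :=
      integral_prod_mul (fun θ : Metric.sphere (0 : Rn N) 1 => (inner ℝ (θ : Rn N) ξ) ^ (2 * m))
        (fun r : Ioi (0:ℝ) => ((r : ℝ) ^ (2 * m) * φ r))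
    _ = _ := by
      congr 1
      simp only [Measure.volumeIoiPow, ENNReal.ofReal]
      rw [integral_withDensity_eq_integral_smul,
        integral_subtype_comap measurableSet_Ioi fun a : ℝ ↦
          Real.toNNReal (a ^ (Module.finrank ℝ (Rn N) - 1)) • (a ^ (2 * m) * φ a),
        setIntegral_congr_fun measurableSet_Ioi fun x hx ↦ ?_]
      · rw [NNReal.smul_def, Real.coe_toNNReal _ (pow_nonneg hx.out.le _), hd, smul_eq_mul,
          ← mul_assoc, ← pow_add]
        congr 2
        omega
      · exact (measurable_subtype_coe.pow_const _).real_toNNReal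

lemma gauss_one (m : ℕ) : ∫ t : ℝ, t ^ (2 * m) * exp (-t ^ 2) = Gamma (m + 1 / 2) := by
  have h := integral_comp_abs (f := fun t : ℝ => t ^ (2 * m) * exp (-t ^ 2))
  simp only [sq_abs, pow_mul] at h
  have h2 := integral_rpow_mul_exp_neg_rpow (p := 2) (q := (2 * m : ℕ)) (by norm_num)
    (by have : (0:ℝ) ≤ (2 * m : ℕ) := by positivity
        linarith)
  simp only [pow_mul, h]
  have h3 : ∫ x in Ioi (0:ℝ), (x ^ 2) ^ m * exp (-x ^ 2) =
      ∫ x in Ioi (0:ℝ), x ^ (((2 * m : ℕ)) : ℝ) * exp (-x ^ (2:ℝ)) := by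
    refine setIntegral_congr_fun measurableSet_Ioi fun u hu => ?_
    simp only [rpow_natCast, rpow_two, pow_mul]
  rw [h3, h2]
  push_cast
  rw [show ((2:ℝ) * m + 1) / 2 = m + 1 / 2 by ring]
  ring

lemma gauss_moment (N : ℕ) (hN : 1 ≤ N) (m : ℕ) (ξ : Rn N) :
    ∫ x : Rn N, (inner ℝ x ξ) ^ (2 * m) * exp (-‖x‖ ^ 2) =
      ‖ξ‖ ^ (2 * m) * Gamma (m + 1 / 2) * √π ^ (N - 1) := by
  obtain ⟨n, rfl⟩ : ∃ n, N = n + 1 := ⟨N - 1, by omega⟩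
  set v : Rn (n + 1) := EuclideanSpace.single 0 ‖ξ‖ with hv
  have hnorm : ‖v‖ = ‖ξ‖ := by simp [hv]
  set T := (Submodule.span ℝ {v - ξ})ᗮ.reflection with hT
  have hTv : T v = ξ := Submodule.reflection_sub hnorm
  rw [← T.measurePreserving.integral_comp T.toHomeomorph.measurableEmbedding]
  have e1 : ∀ x, inner ℝ (T x) ξ = ‖ξ‖ * x 0 := by
    intro x
    rw [← hTv, T.inner_map_map, hv]
    simp [EuclideanSpace.inner_single_right]
  simp only [e1, LinearIsometryEquiv.norm_map]
  rw [← (PiLp.volume_preserving_toLp (Fin (n + 1))).integral_comp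
    (MeasurableEquiv.toLp 2 (Fin (n + 1) → ℝ)).measurableEmbedding]
  have e2 : ∀ x : Fin (n + 1) → ℝ, (‖ξ‖ * (WithLp.toLp 2 x : Rn (n+1)) 0) ^ (2 * m) *
      exp (-‖(WithLp.toLp 2 x : Rn (n+1))‖ ^ 2) = ‖ξ‖ ^ (2 * m) *
      ∏ i, (Fin.cons (fun t : ℝ => t ^ (2 * m) * exp (-t ^ 2))
        (fun _ t => exp (-t ^ 2)) : Fin (n + 1) → ℝ → ℝ) i (x i) := by
    intro x
    rw [Fin.prod_univ_succ, EuclideanSpace.norm_sq_eq, Fin.sum_univ_succ, neg_add, exp_add,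
      mul_pow, ← Finset.sum_neg_distrib, exp_sum]
    simp
    ring
  simp only [e2]
  rw [integral_const_mul, integral_fintype_prod_volume_eq_prod, Fin.prod_univ_succ]
  simp only [Fin.cons_zero, Fin.cons_succ, gauss_one]
  have := gauss_one 0
  simp only [mul_zero, pow_zero, one_mul, Nat.cast_zero, zero_add, Gamma_one_half_eq] at this
  simp [this]
  ring

lemma radial_gauss (N : ℕ) (hN : 1 ≤ N) (m : ℕ) :
    ∫ r in Ioi (0:ℝ), r ^ (2 * m + N - 1) * exp (-r ^ 2) = 1 / 2 * Gamma (m + N / 2) := by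
  have h2 := integral_rpow_mul_exp_neg_rpow (p := 2) (q := (2 * m + N - 1 : ℕ)) (by norm_num)
    (by have : (0:ℝ) ≤ (2 * m + N - 1 : ℕ) := by positivity
        linarith)
  have h3 : ∫ r in Ioi (0:ℝ), r ^ (2 * m + N - 1) * exp (-r ^ 2) =
      ∫ x in Ioi (0:ℝ), x ^ (((2 * m + N - 1 : ℕ)) : ℝ) * exp (-x ^ (2:ℝ)) := by
    refine setIntegral_congr_fun measurableSet_Ioi fun u hu => ?_
    simp only [rpow_natCast, rpow_two]
  rw [h3, h2, Nat.cast_sub (by omega)]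
  push_cast
  congr 2
  ring

def bump (k s : ℝ) (r : ℝ) : ℝ := if r ≤ k then (k ^ 2 - r ^ 2) ^ s else 0

lemma radial_bump (N : ℕ) (hN : 1 ≤ N) (m : ℕ) {s k : ℝ} (hs : 0 < s) (hk : 0 < k) :
    ∫ r in Ioi (0:ℝ), r ^ (2 * m + N - 1) * bump k s r =
      1 / 2 * k ^ (2 * m + N + 2 * s) * (Gamma (m + N / 2) * Gamma (s + 1) /
        Gamma (m + N / 2 + (s + 1))) := by
  have hN' : (1:ℝ) ≤ N := by exact_mod_cast hN
  have ha : (0:ℝ) < m + N / 2 := by positivity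
  set a : ℝ := m + N / 2 with ha'
  set H : ℝ → ℝ := fun y => y ^ (a - 1) * (if y ≤ 1 then (1 - y) ^ s else 0) with hH
  have hb := beta_integral (a := a) (b := s + 1) ha (by positivity)
  have h0 : ∫ y in Ioi (0:ℝ), H y = Gamma a * Gamma (s + 1) / Gamma (a + (s + 1)) := by
    rw [← hb]
    have : ∫ y in Ioi (0:ℝ), H y = ∫ y in Ioc (0:ℝ) 1, H y := by
      refine setIntegral_eq_of_subset_of_forall_sdiff_eq_zero measurableSet_Ioi
        Ioc_subset_Ioi_self ?_
      intro x hx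
      have : ¬ x ≤ 1 := fun h => hx.2 ⟨hx.1, h⟩
      simp [hH, this]
    rw [this, integral_Ioc_eq_integral_Ioo]
    refine setIntegral_congr_fun measurableSet_Ioo fun u hu => ?_
    simp [hH, hu.2.le]
  have hk1 : 0 < k⁻¹ := by positivity
  have h1 := integral_comp_rpow_Ioi_of_pos (g := H) (p := 2) (by norm_num)
  have h2 := integral_comp_mul_left_Ioi
    (fun u : ℝ => (2 * u ^ ((2:ℝ) - 1)) • H (u ^ (2:ℝ))) 0 hk1
  rw [mul_zero, h1, h0, inv_inv, smul_eq_mul] at h2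
  have h3 : ∫ r in Ioi (0:ℝ), 2 * (k ^ (2 * s + 2 * a - 1))⁻¹ *
      (r ^ (2 * m + N - 1) * bump k s r) = k * (Gamma a * Gamma (s + 1) / Gamma (a + (s + 1))) := by
    rw [← h2]
    refine setIntegral_congr_fun measurableSet_Ioi fun r hr => ?_
    have hr : 0 < r := hr
    have hq : 0 < k⁻¹ * r := by positivity
    simp only [smul_eq_mul, hH, bump]
    have hiff : (k⁻¹ * r) ^ (2:ℝ) ≤ 1 ↔ r ≤ k := by
      rw [rpow_two, sq_le_one_iff₀ hq.le, inv_mul_le_iff₀ hk, mul_one]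
    simp only [hiff]
    split_ifs with h
    · have e1 : 1 - (k⁻¹ * r) ^ (2:ℝ) = (k ^ 2 - r ^ 2) / k ^ 2 := by
        rw [rpow_two]; field_simp
      rw [e1, div_rpow (by nlinarith) (by positivity), ← rpow_mul hq.le]
      have e2 : (k⁻¹ * r) ^ ((2:ℝ) - 1) * (k⁻¹ * r) ^ (2 * (a - 1)) =
          r ^ (2 * m + N - 1) / k ^ (2 * a - 1) := by
        rw [← rpow_add hq, show (2:ℝ) - 1 + 2 * (a - 1) = 2 * a - 1 by ring,
          mul_rpow hk1.le hr.le, inv_rpow hk.le, ← rpow_natCast r, Nat.cast_sub (by omega)]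
        push_cast
        rw [show 2 * a - 1 = 2 * m + N - 1 by rw [ha']; ring]
        ring
      have e3 : k ^ (2 * s + 2 * a - 1) = k ^ (2 * a - 1) * (k ^ 2) ^ s := by
        rw [← rpow_natCast k 2, ← rpow_mul hk.le, ← rpow_add hk]
        congr 1; push_cast; ring
      rw [e3]
      have p1 : 0 < k ^ (2 * a - 1) := by positivity
      have p2 : 0 < (k ^ 2) ^ s := by positivity
      calc _ = 2 * (r ^ (2 * m + N - 1) / k ^ (2 * a - 1)) * ((k ^ 2 - r ^ 2) ^ s / (k ^ 2) ^ s) := by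
            field_simp
        _ = _ := by rw [← e2]; ring
    · simp
  rw [integral_const_mul] at h3
  have p3 : 0 < k ^ (2 * s + 2 * a - 1) := by positivity
  have e4 : k ^ (2 * (m:ℝ) + N + 2 * s) = k * k ^ (2 * s + 2 * a - 1) := by
    rw [show 2 * (m:ℝ) + N + 2 * s = 1 + (2 * s + 2 * a - 1) by rw [ha']; ring, rpow_add hk,
      rpow_one]
  rw [e4]
  field_simp at h3 ⊢
  linarith

lemma bump_moment (N : ℕ) (hN : 1 ≤ N) (m : ℕ) {s k : ℝ} (hs : 0 < s) (hk : 0 < k) (ξ : Rn N) :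
    ∫ x : Rn N, (inner ℝ x ξ) ^ (2 * m) * bump k s ‖x‖ =
      ‖ξ‖ ^ (2 * m) * (Gamma (m + 1 / 2) * √π ^ (N - 1) * k ^ (2 * m + N + 2 * s) *
        Gamma (s + 1) / Gamma (m + N / 2 + (s + 1))) := by
  have h1 := gauss_moment N hN m ξ
  rw [polar_moment N hN m ξ (fun r => exp (-r ^ 2)), radial_gauss N hN m] at h1
  rw [polar_moment N hN m ξ, radial_bump N hN m hs hk]
  have hN' : (1:ℝ) ≤ N := by exact_mod_cast hN
  have ha : (0:ℝ) < Gamma (m + N / 2) := by positivity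
  linear_combination (k ^ (2 * m + N + 2 * s) *
    Gamma (s + 1) / Gamma (m + N / 2 + (s + 1))) * h1

lemma moment_pos_const (N : ℕ) (m : ℕ) {s k : ℝ} (hs : 0 < s) (hk : 0 < k) :
    0 < (Gamma (m + 1 / 2) * √π ^ (N - 1) * k ^ (2 * (m:ℝ) + N + 2 * s) *
        Gamma (s + 1) / Gamma (m + (N:ℝ) / 2 + (s + 1))) := by
  positivity

lemma bump_moment_integrable (N : ℕ) (hN : 1 ≤ N) (m : ℕ) {s k : ℝ} (hs : 0 < s) (hk : 0 < k)
    (ξ : Rn N) : Integrable (fun x : Rn N => (inner ℝ x ξ) ^ (2 * m) * bump k s ‖x‖) := by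
  by_cases h : ‖ξ‖ ^ (2 * m) = 0
  · have h1 : ‖ξ‖ = 0 := eq_zero_of_pow_eq_zero h
    have h2 : 2 * m ≠ 0 := by
      intro h3; rw [h3] at h; simp at h
    have h4 : ξ = 0 := norm_eq_zero.1 h1
    simp [h4, zero_pow h2]
  · by_contra hc
    have := bump_moment N hN m hs hk ξ
    rw [integral_undef hc] at this
    have h5 := moment_pos_const N m hs hk
    exact mul_ne_zero h h5.ne' this.symm

lemma bump_nonneg {k s r : ℝ} (hr : 0 ≤ r) : 0 ≤ bump k s r := by
  rw [bump]
  split_ifs with h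
  · exact rpow_nonneg (by nlinarith) _
  · exact le_rfl

lemma cos_transform (N : ℕ) (hN : 1 ≤ N) {s k : ℝ} (hs : 0 < s) (hk : 0 < k) (ξ : Rn N) :
    ∫ x : Rn N, cos (2 * π * inner ℝ x ξ) * bump k s ‖x‖ =
      √π ^ N * Gamma (s + 1) * k ^ (N + 2 * s) * gser (N / 2 + s) ((π * k * ‖ξ‖) ^ 2) := by
  set A : ℝ := √π ^ N * Gamma (s + 1) * k ^ (N + 2 * s) with hA
  have hν : 0 < (N:ℝ) / 2 + s := by positivity
  set F : ℕ → Rn N → ℝ := fun m x => ((-1) ^ m * (2 * π) ^ (2 * m) / (2 * m).factorial) *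
    ((inner ℝ x ξ) ^ (2 * m) * bump k s ‖x‖) with hF
  have i1 : ∀ m, Integrable (F m) := fun m =>
    (bump_moment_integrable N hN m hs hk ξ).const_mul _
  have e1 : ∀ m, ∫ x, F m x = A * gterm (N / 2 + s) ((π * k * ‖ξ‖) ^ 2) m := fun m => by
    simp only [hF]
    rw [integral_const_mul, bump_moment N hN m hs hk ξ, gterm, hA]
    have d := Gamma_mul_Gamma_add_half ((m:ℝ) + 1 / 2)
    rw [show (m:ℝ) + 1 / 2 + 1 / 2 = m + 1 by ring, Gamma_nat_eq_factorial,
      show 2 * ((m:ℝ) + 1 / 2) = (2 * m : ℕ) + 1 by push_cast; ring, Gamma_nat_eq_factorial,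
      show 1 - (((2 * m : ℕ) : ℝ) + 1) = -((2 * m : ℕ) : ℝ) by ring, rpow_neg (by norm_num),
      rpow_natCast] at d
    have d' : Gamma ((m:ℝ) + 1 / 2) = (2 * m).factorial * (2 ^ (2 * m))⁻¹ * √π / m.factorial := by
      rw [← d]; field_simp
    have e4 : k ^ (2 * (m:ℝ) + N + 2 * s) = k ^ (2 * m) * k ^ (N + 2 * s) := by
      rw [show 2 * (m:ℝ) + N + 2 * s = (2 * m : ℕ) + (N + 2 * s) by push_cast; ring, rpow_add hk,
        rpow_natCast]
    have e5 : √π ^ N = √π * √π ^ (N - 1) := by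
      rw [← pow_succ']; congr 1; omega
    have hg : 0 < Gamma ((m:ℝ) + N / 2 + (s + 1)) := by positivity
    rw [d', e4, e5, show (N:ℝ) / 2 + s + 1 + m = m + N / 2 + (s + 1) by ring, ← pow_mul, mul_pow,
      mul_pow, mul_pow]
    field_simp
  have v2 : ∀ m, ∫ x, ‖F m x‖ = A * ‖gterm (N / 2 + s) ((π * k * ‖ξ‖) ^ 2) m‖ := fun m => by
    have hA0 : 0 ≤ A := by positivity
    have : ∀ x, ‖F m x‖ = (-1) ^ m * F m x := by
      intro x
      simp only [hF]
      have h1 : 0 ≤ (inner ℝ x ξ) ^ (2 * m) * bump k s ‖x‖ :=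
        mul_nonneg (by rw [pow_mul]; positivity) (bump_nonneg (norm_nonneg _))
      rw [norm_mul, Real.norm_of_nonneg h1, norm_div, norm_mul, norm_pow, norm_neg, norm_one,
        one_pow, one_mul, Real.norm_of_nonneg (by positivity), Real.norm_of_nonneg (by positivity)]
      have : ((-1:ℝ) ^ m) * (-1) ^ m = 1 := by rw [← mul_pow]; simp
      linear_combination (-((2 * π) ^ (2 * m) / (2 * m).factorial *
        ((inner ℝ x ξ) ^ (2 * m) * bump k s ‖x‖))) * this
    simp only [this]
    rw [integral_const_mul, e1, gterm]
    have hg : 0 < Gamma ((N:ℝ) / 2 + s + 1 + m) := by positivity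
    rw [norm_div, norm_mul, norm_pow, norm_neg, norm_one, one_pow, one_mul,
      Real.norm_of_nonneg (by positivity), Real.norm_of_nonneg (by positivity)]
    have : ((-1:ℝ) ^ m) * (-1) ^ m = 1 := by rw [← mul_pow]; simp
    linear_combination (A * (((π * k * ‖ξ‖) ^ 2) ^ m /
      (m.factorial * Gamma ((N:ℝ) / 2 + s + 1 + m)))) * this
  have h := hasSum_integral_of_summable_integral_norm i1
    (by simpa only [v2] using (gterm_norm_summable hν _).mul_left A)
  simp only [e1] at h
  rw [gser, ← tsum_mul_left, h.tsum_eq]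
  refine integral_congr_ae (.of_forall fun x => ?_)
  simp only [hF]
  rw [← (Real.hasSum_cos (2 * π * inner ℝ x ξ)).tsum_eq, ← tsum_mul_right]
  refine tsum_congr fun m => ?_
  rw [mul_pow (2 * π)]
  ring

lemma FT_bump (N : ℕ) (hN : 1 ≤ N) {s k : ℝ} (hs : 0 < s) (hk : 0 < k) (ξ : Rn N) :
    FT N (fun x => bump k s ‖x‖) ξ =
      ((√π ^ N * Gamma (s + 1) * k ^ (N + 2 * s) *
        gser (N / 2 + s) ((π * k * ‖ξ‖) ^ 2) : ℝ) : ℂ) := by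
  have hInteg : Integrable (fun x : Rn N => bump k s ‖x‖) := by
    simpa using bump_moment_integrable N hN 0 hs hk ξ
  have hcont : Continuous fun x : Rn N => Complex.exp (((-2 * π * inner ℝ x ξ : ℝ) : ℂ) * Complex.I) := by
    fun_prop
  have hInteg2 : Integrable (fun x : Rn N =>
      Complex.exp (((-2 * π * inner ℝ x ξ : ℝ) : ℂ) * Complex.I) • ((bump k s ‖x‖ : ℝ) : ℂ)) := by
    refine hInteg.ofReal.bdd_mul (c := 1) hcont.aestronglyMeasurable (.of_forall fun x => ?_)
    rw [Complex.norm_exp_ofReal_mul_I]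
  rw [FT, Real.fourier_eq', ← cos_transform N hN hs hk ξ]
  have hre : ∀ x : Rn N, (Complex.exp (((-2 * π * inner ℝ x ξ : ℝ) : ℂ) * Complex.I) •
      ((bump k s ‖x‖ : ℝ) : ℂ)).re = cos (2 * π * inner ℝ x ξ) * bump k s ‖x‖ := fun x => by
    rw [smul_eq_mul, Complex.re_mul_ofReal, Complex.exp_ofReal_mul_I_re, neg_mul, neg_mul, cos_neg]
  have him : ∀ x : Rn N, (Complex.exp (((-2 * π * inner ℝ x ξ : ℝ) : ℂ) * Complex.I) •
      ((bump k s ‖x‖ : ℝ) : ℂ)).im = sin (-(2 * π * inner ℝ x ξ)) * bump k s ‖x‖ := fun x => by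
    rw [smul_eq_mul, Complex.im_mul_ofReal, Complex.exp_ofReal_mul_I_im, neg_mul, neg_mul]
  apply Complex.ext
  · rw [Complex.ofReal_re]
    have := Complex.reCLM.integral_comp_comm hInteg2
    simp only [Complex.reCLM_apply, hre] at this
    exact this.symm
  · rw [Complex.ofReal_im]
    have := Complex.imCLM.integral_comp_comm hInteg2
    simp only [Complex.imCLM_apply, him] at this
    rw [← this]
    have h := integral_neg_eq_self
      (fun x : Rn N => sin (-(2 * π * inner ℝ x ξ)) * bump k s ‖x‖) volume
    simp only [inner_neg_left, norm_neg, mul_neg, neg_neg, sin_neg, neg_mul] at h ⊢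
    rw [integral_neg] at h ⊢
    linarith

lemma final (N : ℕ) (hN : 1 ≤ N) (s : ℝ) (hs0 : 0 < s) (k : ℝ) (hk : 0 < k) :
    esE N s (fun x => bump k s ‖x‖) =
      ENNReal.ofReal ((2 : ℝ) ^ (2 * s) * omegaN N * N / ((N : ℝ) + 2 * s) *
        Real.Gamma (s + 1) ^ 2 * k ^ ((N : ℝ) + 2 * s)) := by
  have hNe : Nonempty (Fin N) := ⟨⟨0, hN⟩⟩
  have hN0 : (0:ℝ) < N := by exact_mod_cast hN
  set ν : ℝ := N / 2 + s with hνd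
  have hν : 0 < ν := by positivity
  set A : ℝ := √π ^ N * Gamma (s + 1) * k ^ (N + 2 * s) with hA
  set φ : ℝ → ℝ := fun r => (2 * π * r) ^ (2 * s) * (A * gser ν ((π * k * r) ^ 2)) ^ 2 with hφ
  have h1 : esE N s (fun x => bump k s ‖x‖) = ∫⁻ ξ : Rn N, ENNReal.ofReal (φ ‖ξ‖) := by
    rw [esE]
    refine lintegral_congr fun ξ => ?_
    rw [FT_bump N hN hs0 hk ξ, Complex.norm_real, Real.norm_eq_abs, sq_abs]
  have hb : 0 < π * k := by positivity
  have hsqrt : √π ^ N = π ^ ((N:ℝ) / 2) := by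
    rw [sqrt_eq_rpow, ← rpow_natCast, ← rpow_mul pi_pos.le]
    congr 1; ring
  have hvol : (volume : Measure (Rn N)).real (Metric.ball 0 1) = omegaN N := by
    rw [measureReal_def, EuclideanSpace.volume_ball, Fintype.card_fin, omegaN, hsqrt]
    rw [ENNReal.ofReal_one, one_pow, one_mul, ENNReal.toReal_ofReal (by positivity)]
  have hrad : ∫ r in Ioi (0:ℝ), r ^ (N - 1) • φ r =
      (2 * π) ^ (2 * s) * A ^ 2 * ((π * k) ^ (-(2 * ν)) / (2 * ν)) := by
    rw [← main_integral2 hν hb, ← integral_const_mul]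
    refine setIntegral_congr_fun measurableSet_Ioi fun r hr => ?_
    have hr : 0 < r := hr
    simp only [hφ, smul_eq_mul]
    have : r ^ (2 * ν - 1) = r ^ (N - 1) * r ^ (2 * s) := by
      rw [← rpow_natCast, Nat.cast_sub hN, ← rpow_add hr]
      congr 1; rw [hνd]; push_cast; ring
    rw [this, mul_rpow (by positivity) hr.le]
    ring
  have hval : ∫ ξ : Rn N, φ ‖ξ‖ = (2 : ℝ) ^ (2 * s) * omegaN N * N / ((N : ℝ) + 2 * s) *
        Real.Gamma (s + 1) ^ 2 * k ^ ((N : ℝ) + 2 * s) := by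
    rw [integral_fun_norm_addHaar volume φ]
    simp only [finrank_euclideanSpace, Fintype.card_fin]
    rw [hrad, hvol, nsmul_eq_mul, smul_eq_mul, hA, show 2 * ν = N + 2 * s by rw [hνd]; ring,
      rpow_neg hb.le, mul_rpow pi_pos.le hk.le, mul_rpow (by norm_num) pi_pos.le,
      rpow_add pi_pos]
    have hp : (√π ^ N) ^ 2 = π ^ (N:ℝ) := by
      rw [← pow_mul, mul_comm N 2, pow_mul, sq_sqrt pi_pos.le, rpow_natCast]
    rw [mul_pow, mul_pow, hp]
    have q1 : 0 < π ^ (N:ℝ) := by positivity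
    have q2 : 0 < π ^ (2 * s) := by positivity
    have q3 : 0 < k ^ ((N:ℝ) + 2 * s) := by positivity
    have q4 : 0 < (N:ℝ) + 2 * s := by positivity
    field_simp
  have hpos : 0 < (2 : ℝ) ^ (2 * s) * omegaN N * N / ((N : ℝ) + 2 * s) *
        Real.Gamma (s + 1) ^ 2 * k ^ ((N : ℝ) + 2 * s) := by
    rw [omegaN]; positivity
  rw [h1, ← hval, ofReal_integral_eq_lintegral_ofReal]
  · by_contra hc
    rw [integral_undef hc] at hval
    linarith
  · exact .of_forall fun ξ => by simp only [hφ, Pi.zero_apply]; positivity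

end

/-- the exact fractional energy of `f(x) = (k² - |x|²)₊^s`. -/
theorem energy_of_bump (N : ℕ) (hN : 1 ≤ N) (s : ℝ) (hs0 : 0 < s) (hs1 : s < 1)
    (k : ℝ) (hk : 0 < k) :
    esE N s (fun x => if ‖x‖ ≤ k then (k ^ 2 - ‖x‖ ^ 2) ^ s else 0) =
      ENNReal.ofReal ((2 : ℝ) ^ (2 * s) * omegaN N * N / ((N : ℝ) + 2 * s) *
        Real.Gamma (s + 1) ^ 2 * k ^ ((N : ℝ) + 2 * s)) := by
  exact final N hN s hs0 k hk
end
end
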